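/- Let p ≥ 1 be an integer, u ∈ (−1/2, 1/2), and let f : ℝ → ℝ be continuous. Define Z_p[f] as the integral of ∏_{i=1}^p (sin αᵢ / sin βᵢ)^{2u} · f(βᵢ−αᵢ) over the region {0 < α₁ < β₁ < α₂ < β₂ < ⋯ < α_p < β_p < π} with respect to 2p-dimensional Lebesgue measure dα₁dβ₁⋯dα_pdβ_p. Then Z_p[f] = ∫_S (sinc(2uθ₀)/sinc(2πu)) · (θ₀^p/p!) · [∏_{i=1}^{p−1} f(θᵢ)] · f(π − θ₀ − θ₁ − ⋯ − θ_{p−1}) dθ₀dθ₁⋯dθ_{p−1}, where S = {(θ₀,…,θ_{p−1}) ∈ ℝ^p : each θᵢ > 0 and θ₀ + ⋯ + θ_{p−1} < π}. -/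

import Mathlib

open Real MeasureTheory

/-- `sinc x = sin x / x` for `x ≠ 0` and `sinc 0 = 1`. -/
noncomputable def sinc (x : ℝ) : ℝ := if x = 0 then 1 else Real.sin x / x

section helpers
open Set Filter Topology

lemma sinneg_integrable (s : ℝ) (hs0 : 0 ≤ s) (hs : s < 1) (c x y : ℝ) :
    IntervalIntegrable (fun t => rexp (-s * Real.log |Real.sin (t - c)|)) volume x y := by
  have key : ∀ x y : ℝ, IntervalIntegrable (fun t => rexp (-s * Real.log |Real.sin t|)) volume x y := by
    have hper : Function.Periodic (fun t => rexp (-s * Real.log |Real.sin t|)) π := by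
      intro t; simp [Real.sin_add_pi]
    have h1 : IntervalIntegrable (fun t => rexp (-s * Real.log |Real.sin t|)) volume 0 (π/2) := by
      have h2 : IntervalIntegrable (fun t : ℝ => (2/π)^(-s) * t^(-s)) volume 0 (π/2) :=
        (intervalIntegral.intervalIntegrable_rpow' (by linarith)).const_mul _
      refine h2.mono_fun' (Measurable.aestronglyMeasurable (by fun_prop)) ?_
      rw [uIoc_of_le (by positivity)]
      filter_upwards [ae_restrict_mem measurableSet_Ioc] with t ht
      have h3 := Real.mul_le_sin ht.1.le ht.2
      have h4 : 0 < 2/π * t := by have := ht.1; positivity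
      rw [Real.norm_eq_abs, abs_of_pos (Real.exp_pos _), abs_of_pos (by linarith),
        ← Real.mul_rpow (by positivity) ht.1.le, Real.rpow_def_of_pos h4, Real.exp_le_exp]
      have := Real.log_le_log h4 h3
      nlinarith
    have h1' : IntervalIntegrable (fun t => rexp (-s * Real.log |Real.sin t|)) volume (-(π/2)) 0 := by
      have := h1.comp_sub_left 0
      simp [abs_neg] at this
      simpa using this.symm
    have h5 := h1'.trans h1
    intro x y
    exact hper.intervalIntegrable Real.pi_ne_zero (t := -(π/2)) (by convert h5 using 1; ring) x y
  have := (key (x - c) (y - c)).comp_sub_right c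
  simpa using this

lemma prod_bound {m : ℕ} (s : ℝ) (hs0 : 0 ≤ s) (K : ℝ) (l : Fin m → ℝ) (hm : 0 < m)
    (hK : 0 ≤ K)
    (h : ∀ i j, i ≠ j → l i ≤ K ∨ l j ≤ K) :
    rexp (∑ j, s * l j) ≤ rexp (m * (s * K)) * ∑ j, rexp (s * l j) := by
  have : Nonempty (Fin m) := ⟨⟨0, hm⟩⟩
  obtain ⟨j0, hj0⟩ := Finite.exists_max l
  have h1 : ∑ j, s * l j ≤ m * (s * K) + s * l j0 := by
    have : ∀ j, s * l j ≤ s * K + if j = j0 then s * l j0 else 0 := by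
      intro j
      by_cases hj : j = j0
      · subst hj; simp; positivity
      · simp [hj]
        have : l j ≤ K := by
          rcases h j j0 hj with h | h
          · exact h
          · exact (hj0 j).trans h
        gcongr
    calc _ ≤ ∑ j, (s * K + if j = j0 then s * l j0 else 0) := Finset.sum_le_sum fun j _ => this j
      _ = _ := by simp [Finset.sum_add_distrib]
  calc _ ≤ rexp (m * (s * K) + s * l j0) := Real.exp_le_exp.2 h1
    _ = rexp (m * (s * K)) * rexp (s * l j0) := Real.exp_add _ _
    _ ≤ _ := by
      gcongr
      exact Finset.single_le_sum (f := fun j => rexp (s * l j)) (fun j _ => (Real.exp_pos _).le) (Finset.mem_univ j0)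

lemma bound_integrable {m : ℕ} (s : ℝ) (hs0 : 0 ≤ s) (hs : s < 1) (hm : 0 < m) (c : Fin m → ℝ)
    (hc : ∀ i j, i ≠ j → Real.sin (c i - c j) ≠ 0) :
    IntervalIntegrable (fun t => rexp (∑ j, s * (Real.log 2 - Real.log |Real.sin (t - c j)|))) volume 0 π := by
  obtain ⟨δ, hδ, hδ1, hδ'⟩ : ∃ δ : ℝ, 0 < δ ∧ δ ≤ 1 ∧ ∀ i j, i ≠ j → 2 * δ ≤ |Real.sin (c i - c j)| := by
    have hfin : (Set.univ : Set (Fin m × Fin m)).Finite := Set.finite_univ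
    have h0 : ∀ q : Fin m × Fin m, ∃ δ : ℝ, 0 < δ ∧ (q.1 ≠ q.2 → 2 * δ ≤ |Real.sin (c q.1 - c q.2)|) := by
      intro q
      by_cases hq : q.1 = q.2
      · exact ⟨1, one_pos, fun h => absurd hq h⟩
      · exact ⟨|Real.sin (c q.1 - c q.2)| / 2, by have := abs_pos.2 (hc _ _ hq); positivity, fun _ => by linarith⟩
    choose d hd hd' using h0
    have : Nonempty (Fin m × Fin m) := ⟨(⟨0, hm⟩, ⟨0, hm⟩)⟩
    obtain ⟨q0, hq0⟩ := Finite.exists_min d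
    refine ⟨min (d q0) 1, lt_min (hd q0) one_pos, min_le_right _ _, fun i j hij => ?_⟩
    refine le_trans ?_ (hd' (i, j) hij)
    have := hq0 (i, j)
    have := min_le_left (d q0) 1
    linarith
  have hitg : IntervalIntegrable (fun t => rexp (m * (s * Real.log 2)) * (rexp (m * (s * (-Real.log δ))) *
      ∑ j, rexp (-s * Real.log |Real.sin (t - c j)|))) volume 0 π := by
    refine IntervalIntegrable.const_mul (IntervalIntegrable.const_mul ?_ _) _
    have := IntervalIntegrable.sum (μ := volume) (a := 0) (b := π) Finset.univ
      (f := fun j t => rexp (-s * Real.log |Real.sin (t - c j)|)) (fun j _ => sinneg_integrable s hs0 hs (c j) 0 π)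
    have e : (∑ j, fun t => rexp (-s * Real.log |Real.sin (t - c j)|)) = fun t => ∑ j, rexp (-s * Real.log |Real.sin (t - c j)|) := by
      ext t; simp
    rwa [e] at this
  have hae : ∀ᵐ t : ℝ, ∀ j, Real.sin (t - c j) ≠ 0 := by
    rw [ae_all_iff]; intro j
    have : {t : ℝ | Real.sin (t - c j) = 0}.Countable := by
      refine (Set.countable_range (fun n : ℤ => n * π + c j)).mono ?_
      intro t ht
      obtain ⟨n, hn⟩ := Real.sin_eq_zero_iff.1 ht
      exact ⟨n, by simp [hn]⟩
    rw [ae_iff]; simpa using this.measure_zero volume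
  refine hitg.mono_fun' (Measurable.aestronglyMeasurable (by fun_prop)) ?_
  filter_upwards [ae_restrict_of_ae hae] with t ht
  rw [Real.norm_eq_abs, abs_of_pos (Real.exp_pos _)]
  have h1 := prod_bound s hs0 (-Real.log δ) (fun j => -Real.log |Real.sin (t - c j)|) hm
    (by have := Real.log_nonpos hδ.le hδ1; linarith)
    (by
      intro i j hij
      by_contra! hcon
      obtain ⟨h1, h2⟩ := hcon
      have h1 := (Real.log_lt_log_iff (abs_pos.2 (ht i)) hδ).1 (by linarith)
      have h2 := (Real.log_lt_log_iff (abs_pos.2 (ht j)) hδ).1 (by linarith)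
      have h3 := hδ' i j hij
      have h4 : Real.sin (c i - c j) = Real.sin (t - c j) * Real.cos (t - c i) - Real.cos (t - c j) * Real.sin (t - c i) := by
        rw [← Real.sin_sub]; ring_nf
      have h5 : |Real.sin (c i - c j)| ≤ |Real.sin (t - c j)| + |Real.sin (t - c i)| := by
        rw [h4]
        refine (abs_sub _ _).trans ?_
        rw [abs_mul, abs_mul]
        have a1 := Real.abs_cos_le_one (t - c i)
        have a2 := Real.abs_cos_le_one (t - c j)
        have a3 := abs_nonneg (Real.sin (t - c i))
        have a4 := abs_nonneg (Real.sin (t - c j))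
        nlinarith
      linarith)
  have h2 : ∑ j, s * (Real.log 2 - Real.log |Real.sin (t - c j)|)
      = m * (s * Real.log 2) + ∑ j, s * (-Real.log |Real.sin (t - c j)|) := by
    have : ∀ j, s * (Real.log 2 - Real.log |Real.sin (t - c j)|) = s * Real.log 2 + s * (-Real.log |Real.sin (t - c j)|) := fun j => by ring
    simp_rw [this, Finset.sum_add_distrib]
    simp
  rw [h2, Real.exp_add]
  gcongr
  simp only [neg_mul, mul_neg] at h1 ⊢
  exact h1

noncomputable def Hc {m : ℕ} (u : ℝ) (a b : Fin m → ℝ) (z : ℂ) : ℂ :=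
  Complex.exp (∑ j, (2 * u : ℝ) * (Complex.log (1 - z * Complex.exp (-((2 * a j : ℝ) * Complex.I)))
    - Complex.log (1 - z * Complex.exp (-((2 * b j : ℝ) * Complex.I)))))

lemma norm_e (x : ℝ) : ‖Complex.exp (-((x : ℝ) * Complex.I))‖ = 1 := by
  have := Complex.norm_exp_ofReal_mul_I (-x)
  simpa using this

lemma slit (z : ℂ) (hz : ‖z‖ < 1) (x : ℝ) :
    1 - z * Complex.exp (-((x : ℝ) * Complex.I)) ∈ Complex.slitPlane := by
  left
  have h1 : ‖z * Complex.exp (-((x : ℝ) * Complex.I))‖ < 1 := by rw [norm_mul, norm_e]; simpa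
  have := (Complex.re_le_norm (z * Complex.exp (-((x : ℝ) * Complex.I))))
  simp only [Complex.sub_re, Complex.one_re]
  linarith

lemma Hc_diff {m : ℕ} (u : ℝ) (a b : Fin m → ℝ) (z : ℂ) (hz : ‖z‖ < 1) :
    DifferentiableAt ℂ (Hc u a b) z := by
  unfold Hc
  have h1 := fun j => slit z hz (2 * a j)
  have h2 := fun j => slit z hz (2 * b j)
  refine DifferentiableAt.cexp (DifferentiableAt.fun_sum fun j _ => ?_)
  refine DifferentiableAt.const_mul (DifferentiableAt.fun_sub ?_ ?_) _
  · exact DifferentiableAt.clog (by fun_prop) (h1 j)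
  · exact DifferentiableAt.clog (by fun_prop) (h2 j)

lemma Hc_mean {m : ℕ} (u : ℝ) (a b : Fin m → ℝ) (r : ℝ) (hr0 : 0 ≤ r) (hr : r < 1) :
    ∫ t in (0:ℝ)..π, Hc u a b (r * Complex.exp ((2 * t : ℝ) * Complex.I)) = π := by
  have h := DiffContOnCl.circleAverage (f := Hc u a b) (c := 0) (R := r) (by
    apply DifferentiableOn.diffContOnCl
    intro z hz
    refine (Hc_diff u a b z ?_).differentiableWithinAt
    have := Metric.closure_ball_subset_closedBall hz
    simp [abs_of_nonneg hr0] at this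
    linarith)
  rw [Real.circleAverage_def] at h
  have h0 : Hc u a b 0 = 1 := by simp [Hc]
  rw [h0] at h
  have h3 := intervalIntegral.integral_comp_mul_left (a := 0) (b := π) (fun θ => Hc u a b (circleMap 0 r θ)) (c := 2) two_ne_zero
  have h4 : ∀ t : ℝ, Hc u a b (r * Complex.exp ((2 * t : ℝ) * Complex.I)) = Hc u a b (circleMap 0 r (2 * t)) := by
    intro t; simp [circleMap]
  simp_rw [h4, h3]
  simp only [mul_zero]
  have hpi : (π : ℂ) ≠ 0 := by exact_mod_cast Real.pi_ne_zero
  have h5 : ∫ θ in (0:ℝ)..2 * π, Hc u a b (circleMap 0 r θ) = 2 * π := by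
    simp only [Complex.real_smul] at h
    push_cast at h
    field_simp at h
    exact h
  rw [h5]
  simp only [Complex.real_smul]
  push_cast
  field_simp

lemma one_sub_exp (s : ℝ) : 1 - Complex.exp ((2 * s : ℝ) * Complex.I)
    = (2 * Real.sin s : ℝ) * Complex.exp ((s - π / 2 : ℝ) * Complex.I) := by
  have h1 : Complex.exp ((2 * s : ℝ) * Complex.I) = Complex.exp (s * Complex.I) * Complex.exp (s * Complex.I) := by
    rw [← Complex.exp_add]; push_cast; ring_nf
  have h2 : Complex.exp ((s - π / 2 : ℝ) * Complex.I) = Complex.exp (s * Complex.I) * (-Complex.I) := by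
    have : Complex.exp (-(π / 2 * Complex.I)) = -Complex.I := by
      rw [Complex.exp_neg, Complex.exp_pi_div_two_mul_I]; simp
    rw [← this, ← Complex.exp_add]; push_cast; ring_nf
  rw [h1, h2, Complex.exp_mul_I]
  push_cast
  have := Complex.sin_sq_add_cos_sq (s : ℂ)
  ring_nf
  simp only [Complex.I_sq]
  linear_combination -this

lemma norm_one_sub_exp (s : ℝ) : ‖1 - Complex.exp ((2 * s : ℝ) * Complex.I)‖ = 2 * |Real.sin s| := by
  rw [one_sub_exp, norm_mul, Complex.norm_exp_ofReal_mul_I, Complex.norm_real]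
  simp [abs_mul]

lemma sin_ae {m : ℕ} (c : Fin m → ℝ) : ∀ᵐ t : ℝ, ∀ j, Real.sin (t - c j) ≠ 0 := by
    rw [ae_all_iff]; intro j
    have : {t : ℝ | Real.sin (t - c j) = 0}.Countable := by
      refine (Set.countable_range (fun n : ℤ => n * π + c j)).mono ?_
      intro t ht
      obtain ⟨n, hn⟩ := Real.sin_eq_zero_iff.1 ht
      exact ⟨n, by simp [hn]⟩
    rw [ae_iff]; simpa using this.measure_zero volume

lemma arg_eq (t c : ℝ) (r : ℂ) : r * Complex.exp ((2 * t : ℝ) * Complex.I) * Complex.exp (-((2 * c : ℝ) * Complex.I))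
   = r * Complex.exp ((2 * (t - c) : ℝ) * Complex.I) := by
  rw [mul_assoc, ← Complex.exp_add]; push_cast; ring_nf

lemma near_bounds (w : ℂ) (hw : ‖w‖ = 1) (r : ℝ) (hr0 : 0 ≤ r) (hr : r ≤ 1) :
    ‖1 - r * w‖ ≤ 2 ∧ ‖1 - w‖ / 2 ≤ ‖1 - r * w‖ := by
  have h0 : ‖(r : ℂ) * w‖ = r := by rw [norm_mul, hw]; simp [abs_of_nonneg hr0]
  constructor
  · calc _ ≤ ‖(1:ℂ)‖ + ‖(r:ℂ) * w‖ := norm_sub_le _ _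
      _ ≤ 2 := by rw [h0]; simp; linarith
  · have h1 : ‖1 - w‖ ≤ ‖1 - r * w‖ + (1 - r) := by
      have : 1 - w = (1 - r * w) + (-(1 - r : ℝ) * w) := by push_cast; ring
      rw [this]
      refine (norm_add_le _ _).trans ?_
      have h : ‖(-((1 - r : ℝ) : ℂ) * w)‖ = 1 - r := by
        rw [norm_mul, hw, norm_neg, Complex.norm_real]; simp; linarith
      rw [h]
    have h2 : 1 - r ≤ ‖1 - r * w‖ := by
      have := norm_sub_norm_le (1:ℂ) (r * w)
      rw [h0] at this; simpa using this
    linarith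

lemma Hc_bound {m : ℕ} (u : ℝ) (a b : Fin m → ℝ) (r t : ℝ) (hr0 : 0 ≤ r) (hr : r ≤ 1)
    (hta : ∀ j, Real.sin (t - a j) ≠ 0) (htb : ∀ j, Real.sin (t - b j) ≠ 0) :
    ‖Hc u a b (r * Complex.exp ((2 * t : ℝ) * Complex.I))‖ ≤
      rexp (∑ j, |2 * u| * (Real.log 2 - Real.log |Real.sin (t - (if 0 ≤ u then b j else a j))|)) := by
  rw [Hc, Complex.norm_exp, Real.exp_le_exp, Complex.re_sum]
  refine Finset.sum_le_sum fun j _ => ?_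
  rw [arg_eq, arg_eq, Complex.re_ofReal_mul, Complex.sub_re, Complex.log_re, Complex.log_re]
  have na : ∀ c, ‖Complex.exp ((2 * (t - c) : ℝ) * Complex.I)‖ = 1 := fun c => Complex.norm_exp_ofReal_mul_I _
  obtain ⟨a1, a2⟩ := near_bounds _ (na (a j)) r hr0 hr
  obtain ⟨b1, b2⟩ := near_bounds _ (na (b j)) r hr0 hr
  rw [norm_one_sub_exp] at a2 b2
  have pa := abs_pos.2 (hta j)
  have pb := abs_pos.2 (htb j)
  set x := ‖1 - r * Complex.exp ((2 * (t - a j) : ℝ) * Complex.I)‖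
  set y := ‖1 - r * Complex.exp ((2 * (t - b j) : ℝ) * Complex.I)‖
  have la1 := Real.log_le_log (by linarith) a1
  have lb1 := Real.log_le_log (by linarith) b1
  have la2 := Real.log_le_log pa (by linarith : |Real.sin (t - a j)| ≤ x)
  have lb2 := Real.log_le_log pb (by linarith : |Real.sin (t - b j)| ≤ y)
  by_cases hu : 0 ≤ u
  · rw [if_pos hu, abs_of_nonneg (by linarith)]
    exact mul_le_mul_of_nonneg_left (by linarith) (by linarith)
  · push Not at hu
    rw [if_neg (by linarith), abs_of_neg (by linarith)]
    nlinarith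

lemma Hc_meas {m : ℕ} (u : ℝ) (a b : Fin m → ℝ) : Measurable (Hc u a b) := by
  unfold Hc; fun_prop

lemma Hc_limit {m : ℕ} (hm : 0 < m) (u : ℝ) (hu : u ∈ Set.Ioo (-(1/2) : ℝ) (1/2)) (a b : Fin m → ℝ)
    (ha : ∀ i j, i ≠ j → Real.sin (a i - a j) ≠ 0) (hb : ∀ i j, i ≠ j → Real.sin (b i - b j) ≠ 0) :
    IntervalIntegrable (fun t : ℝ => Hc u a b (Complex.exp ((2 * t : ℝ) * Complex.I))) volume 0 π ∧
    ∫ t in (0:ℝ)..π, Hc u a b (Complex.exp ((2 * t : ℝ) * Complex.I)) = π := by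
  have hB := bound_integrable |2 * u| (abs_nonneg _) (by
    rw [abs_lt]; constructor <;> linarith [hu.1, hu.2]) hm (fun j => if 0 ≤ u then b j else a j) (by
      intro i j hij; split_ifs
      · exact hb i j hij
      · exact ha i j hij)
  have hmeas : ∀ r : ℂ, AEStronglyMeasurable (fun t : ℝ => Hc u a b (r * Complex.exp ((2 * t : ℝ) * Complex.I)))
      (volume.restrict (Set.uIoc 0 π)) := fun r => by
    refine Measurable.aestronglyMeasurable ((Hc_meas u a b).comp ?_)
    fun_prop
  have haea := sin_ae a
  have haeb := sin_ae b
  constructor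
  · refine hB.mono_fun' (by simpa using hmeas 1) ?_
    filter_upwards [ae_restrict_of_ae haea, ae_restrict_of_ae haeb] with t h1 h2
    simpa using Hc_bound u a b 1 t zero_le_one le_rfl h1 h2
  · have hl : Tendsto (fun r : ℝ => ∫ t in (0:ℝ)..π, Hc u a b (r * Complex.exp ((2 * t : ℝ) * Complex.I))) (𝓝[<] 1)
        (𝓝 (∫ t in (0:ℝ)..π, Hc u a b (Complex.exp ((2 * t : ℝ) * Complex.I)))) := by
      have hev : ∀ᶠ r : ℝ in 𝓝[<] 1, r ∈ Ioo (0:ℝ) 1 := Ioo_mem_nhdsLT zero_lt_one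
      refine intervalIntegral.tendsto_integral_filter_of_dominated_convergence _ ?_ ?_ hB ?_
      · filter_upwards with r; exact hmeas r
      · filter_upwards [hev] with r hr
        filter_upwards [haea, haeb] with t h1 h2 _
        exact Hc_bound u a b r t hr.1.le hr.2.le h1 h2
      · filter_upwards [haea, haeb] with t h1 h2 _
        have hsl : ∀ c, Real.sin (t - c) ≠ 0 →
            1 - Complex.exp ((2 * t : ℝ) * Complex.I) * Complex.exp (-((2 * c : ℝ) * Complex.I)) ∈ Complex.slitPlane := by
          intro c hc
          have := arg_eq t c 1
          rw [one_mul, one_mul] at this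
          rw [this]
          left
          simp only [Complex.sub_re, Complex.one_re, Complex.exp_ofReal_mul_I_re]
          rw [Real.cos_two_mul, Real.cos_sq']
          have := sq_pos_of_ne_zero hc
          nlinarith
        have hcont : ContinuousAt (Hc u a b) (Complex.exp ((2 * t : ℝ) * Complex.I)) := by
          unfold Hc
          refine ContinuousAt.cexp (tendsto_finsetSum _ fun j _ => ?_)
          refine ContinuousAt.mul continuousAt_const (ContinuousAt.sub (ContinuousAt.clog ?_ (hsl _ (h1 j))) (ContinuousAt.clog ?_ (hsl _ (h2 j)))) <;> fun_prop
        refine hcont.tendsto.comp ?_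
        have : Continuous fun r : ℝ => (r : ℂ) * Complex.exp ((2 * t : ℝ) * Complex.I) := by fun_prop
        have := this.tendsto 1
        rw [Complex.ofReal_one, one_mul] at this
        exact this.mono_left nhdsWithin_le_nhds
    have hl2 : Tendsto (fun r : ℝ => ∫ t in (0:ℝ)..π, Hc u a b (r * Complex.exp ((2 * t : ℝ) * Complex.I))) (𝓝[<] 1)
        (𝓝 (π : ℂ)) := by
      refine tendsto_const_nhds.congr' ?_
      filter_upwards [Ioo_mem_nhdsLT zero_lt_one] with r hr
      rw [Hc_mean u a b r hr.1.le hr.2]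
    exact tendsto_nhds_unique hl hl2

lemma log_one_sub (s : ℝ) (h1 : -π < s) (h2 : s < π) (h0 : s ≠ 0) :
    Complex.log (1 - Complex.exp ((2 * s : ℝ) * Complex.I))
      = ((Real.log 2 + Real.log |Real.sin s| : ℝ) : ℂ) + ((if 0 < s then s - π / 2 else s + π / 2 : ℝ) : ℂ) * Complex.I := by
  have key : ∀ s : ℝ, 0 < s → s < π → Complex.log (1 - Complex.exp ((2 * s : ℝ) * Complex.I))
      = ((Real.log 2 + Real.log |Real.sin s| : ℝ) : ℂ) + ((s - π / 2 : ℝ) : ℂ) * Complex.I := by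
    intro s hs hs'
    have hsin := Real.sin_pos_of_pos_of_lt_pi hs hs'
    rw [one_sub_exp, abs_of_pos hsin, ← Real.log_mul two_ne_zero hsin.ne']
    have : ((2 * Real.sin s : ℝ) : ℂ) = Complex.exp ((Real.log (2 * Real.sin s) : ℝ) : ℂ) := by
      rw [← Complex.ofReal_exp, Real.exp_log (by positivity)]
    conv_lhs => rw [this]
    rw [← Complex.exp_add, Complex.log_exp]
    · simp; linarith
    · simp; linarith [Real.pi_pos]
  by_cases hs : 0 < s
  · rw [if_pos hs]; exact key s hs h2
  · have hs' : s < 0 := lt_of_le_of_ne (not_lt.1 hs) h0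
    rw [if_neg hs]
    have := key (s + π) (by linarith) (by linarith)
    rw [Real.sin_add_pi, abs_neg] at this
    have e : Complex.exp ((2 * (s + π) : ℝ) * Complex.I) = Complex.exp ((2 * s : ℝ) * Complex.I) := by
      have : ((2 * (s + π) : ℝ) : ℂ) * Complex.I = (2 * s : ℝ) * Complex.I + 2 * π * Complex.I := by push_cast; ring
      rw [this, Complex.exp_periodic]
    rw [e] at this
    rw [this]
    congr 4
    ring

noncomputable def Wt {m : ℕ} (u : ℝ) (a b : Fin m → ℝ) (t : ℝ) : ℝ :=
  ∏ j, (|Real.sin (t - a j)| / |Real.sin (t - b j)|) ^ (2 * u)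

lemma Hc_value {m : ℕ} (u : ℝ) (a b : Fin m → ℝ) (t : ℝ) (ht : t ∈ Ioo 0 π)
    (ha : ∀ j, a j ∈ Ico 0 π) (hb : ∀ j, b j ∈ Ico 0 π) (hta : ∀ j, t ≠ a j) (htb : ∀ j, t ≠ b j)
    (hab : ∀ j, a j < b j) :
    Hc u a b (Complex.exp ((2 * t : ℝ) * Complex.I)) = (Wt u a b t : ℂ) *
      Complex.exp ((2 * u * (∑ j, ((b j - a j) - if a j < t ∧ t < b j then π else 0)) : ℝ) * Complex.I) := by
  unfold Hc Wt
  have hne : ∀ c, c ∈ Ico 0 π → t ≠ c → 0 < |Real.sin (t - c)| := by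
    intro c hc htc
    rw [abs_pos]
    intro h
    have := (Real.sin_eq_zero_iff_of_lt_of_lt (by linarith [hc.2, ht.1]) (by linarith [hc.1, ht.2])).1 h
    exact htc (by linarith)
  have hW : ∏ j, (|Real.sin (t - a j)| / |Real.sin (t - b j)|) ^ (2 * u)
     = rexp (∑ j, 2 * u * (Real.log |Real.sin (t - a j)| - Real.log |Real.sin (t - b j)|)) := by
    rw [Real.exp_sum]
    refine Finset.prod_congr rfl fun j _ => ?_
    rw [Real.rpow_def_of_pos (div_pos (hne _ (ha j) (hta j)) (hne _ (hb j) (htb j))),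
      Real.log_div (hne _ (ha j) (hta j)).ne' (hne _ (hb j) (htb j)).ne', mul_comm]
  rw [hW, Complex.ofReal_exp, ← Complex.exp_add]
  congr 1
  rw [Finset.mul_sum, Complex.ofReal_sum, Complex.ofReal_sum, Finset.sum_mul, ← Finset.sum_add_distrib]
  refine Finset.sum_congr rfl fun j _ => ?_
  have ea := arg_eq t (a j) 1
  have eb := arg_eq t (b j) 1
  rw [one_mul, one_mul] at ea eb
  rw [ea, eb, log_one_sub _ (by linarith [(ha j).2, ht.1]) (by linarith [(ha j).1, ht.2]) (sub_ne_zero.2 (hta j)),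
    log_one_sub _ (by linarith [(hb j).2, ht.1]) (by linarith [(hb j).1, ht.2]) (sub_ne_zero.2 (htb j))]
  have hphase : (if 0 < t - a j then t - a j - π / 2 else t - a j + π / 2)
     - (if 0 < t - b j then t - b j - π / 2 else t - b j + π / 2)
     = (b j - a j) - if a j < t ∧ t < b j then π else 0 := by
    have h1 := hta j
    have h2 := htb j
    have h3 := hab j
    rcases lt_or_gt_of_ne h1 with h1 | h1 <;> rcases lt_or_gt_of_ne h2 with h2 | h2
    · rw [if_neg (by linarith), if_neg (by linarith), if_neg (by intro h; linarith [h.1])]; ring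
    · linarith
    · rw [if_pos (by linarith), if_neg (by linarith), if_pos ⟨h1, h2⟩]; ring
    · rw [if_pos (by linarith), if_pos (by linarith), if_neg (by intro h; linarith [h.2])]; ring
  rw [← hphase]
  push_cast
  ring

lemma find_block {m : ℕ} (a : Fin (m+1) → ℝ) (t : ℝ) (h0 : a 0 ≤ t) (h1 : t < a (Fin.last m)) :
    ∃ j : Fin m, a j.castSucc ≤ t ∧ t < a j.succ := by
  by_contra! hcon
  have : ∀ i, a i ≤ t := by
    intro i
    induction i using Fin.induction with
    | zero => exact h0
    | succ j ih => exact hcon j ih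
  exact absurd h1 (not_lt.2 (this _))

lemma oneD {m : ℕ} (hm : 0 < m) (u : ℝ) (hu : u ∈ Set.Ioo (-(1/2) : ℝ) (1/2)) (a : Fin (m+1) → ℝ) (b : Fin m → ℝ)
    (h1 : ∀ j, a j.castSucc < b j) (h2 : ∀ j, b j < a j.succ) (h0 : a 0 = 0) (hpi : a (Fin.last m) = π) :
    IntegrableOn (Wt u (fun j => a j.castSucc) b) (⋃ j, Ioo (b j) (a j.succ)) ∧
    Real.sin (2 * π * u) * ∫ t in (⋃ j, Ioo (b j) (a j.succ)), Wt u (fun j => a j.castSucc) b t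
      = π * Real.sin (2 * u * (π - ∑ j, (b j - a j.castSucc))) := by
  have hmono : StrictMono a := Fin.strictMono_iff_lt_succ.2 fun j => (h1 j).trans (h2 j)
  set S := ⋃ j, Ioo (b j) (a j.succ) with hS
  set a' : Fin m → ℝ := fun j => a j.castSucc with ha'
  set Θ := ∑ j, (b j - a' j) with hΘ
  have hSm : MeasurableSet S := MeasurableSet.iUnion fun j => measurableSet_Ioo
  have hlt : ∀ i j : Fin m, i < j → b i < a' j := fun i j hij =>
    (h2 i).trans_le (hmono.monotone (by rw [Fin.le_def]; simp; exact hij))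
  have ra : ∀ j, a' j ∈ Ico 0 π := fun j => ⟨by rw [← h0]; exact hmono.monotone (Fin.zero_le _), by
    rw [← hpi]; exact hmono (Fin.castSucc_lt_last j)⟩
  have rb : ∀ j, b j ∈ Ico 0 π := fun j => ⟨(ra j).1.trans (h1 j).le, (h2 j).trans_le (by
    rw [← hpi]; exact hmono.monotone (Fin.le_last _))⟩
  have hsub : S ⊆ Ioc 0 π := by
    intro t ht
    obtain ⟨j, hj⟩ := mem_iUnion.1 ht
    exact ⟨(rb j).1.trans_lt hj.1, hj.2.le.trans (by rw [← hpi]; exact hmono.monotone (Fin.le_last _))⟩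
  have sne : ∀ c : Fin m → ℝ, (∀ j, c j ∈ Ico 0 π) → (∀ i j, i < j → c i < c j) → ∀ i j, i ≠ j → Real.sin (c i - c j) ≠ 0 := by
    intro c hc hc' i j hij h
    have := (Real.sin_eq_zero_iff_of_lt_of_lt (by linarith [(hc i).1, (hc j).2]) (by linarith [(hc i).2, (hc j).1])).1 h
    rcases lt_or_gt_of_ne hij with h | h
    · linarith [hc' _ _ h]
    · linarith [hc' _ _ h]
  obtain ⟨hitg, hval⟩ := Hc_limit hm u hu a' b (sne a' ra fun i j hij => (h1 i).trans (hlt i j hij))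
    (sne b rb fun i j hij => (hlt i j hij).trans (h1 j))
  have hae : ∀ᵐ t : ℝ, t ≠ 0 ∧ t ≠ π ∧ (∀ j, t ≠ a' j) ∧ (∀ j, t ≠ b j) := by
    have e : ∀ c : ℝ, ∀ᵐ t : ℝ, t ≠ c := fun c => by rw [ae_iff]; simp
    filter_upwards [e 0, e π, ae_all_iff.2 fun j => e (a' j), ae_all_iff.2 fun j => e (b j)] with t h1 h2 h3 h4
    exact ⟨h1, h2, h3, h4⟩
  have hsumS : ∀ t ∈ S, (∑ j, ((b j - a' j) - if a' j < t ∧ t < b j then π else 0)) = Θ := by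
    intro t ht
    obtain ⟨j, hj⟩ := mem_iUnion.1 ht
    refine Finset.sum_congr rfl fun i _ => ?_
    rw [if_neg, sub_zero]
    rintro ⟨q1, q2⟩
    rcases lt_trichotomy i j with h | h | h
    · linarith [hlt i j h, h1 j, hj.1]
    · subst h; linarith [hj.1]
    · have := hmono.monotone (show j.succ ≤ i.castSucc by rw [Fin.le_def]; simpa using h)
      linarith [hj.2]
  have hsumN : ∀ t ∈ Ioo 0 π, t ∉ S → (∀ j, t ≠ a' j) → (∀ j, t ≠ b j) →
      (∑ j, ((b j - a' j) - if a' j < t ∧ t < b j then π else 0)) = Θ - π := by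
    intro t ht htS hta htb
    obtain ⟨j, hj1, hj2⟩ := find_block a t (by rw [h0]; exact ht.1.le) (by rw [hpi]; exact ht.2)
    have hj1' : a' j < t := lt_of_le_of_ne hj1 (hta j).symm
    have hj2' : t < b j := by
      by_contra hc
      exact htS (mem_iUnion.2 ⟨j, lt_of_le_of_ne (not_lt.1 hc) (htb j).symm, hj2⟩)
    rw [Finset.sum_sub_distrib]
    congr 1
    rw [Finset.sum_eq_single j, if_pos ⟨hj1', hj2'⟩]
    · intro i _ hij
      rw [if_neg]
      rintro ⟨q1, q2⟩
      rcases lt_or_gt_of_ne hij with h | h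
      · linarith [hlt i j h]
      · linarith [hlt j i h]
    · simp
  have hW0 : ∀ t, 0 ≤ Wt u a' b t := fun t => Finset.prod_nonneg fun j _ => Real.rpow_nonneg (by positivity) _
  have hitgOn : IntegrableOn (Wt u a' b) (Ioc 0 π) := by
    have h3 := ((intervalIntegrable_iff_integrableOn_Ioc_of_le Real.pi_pos.le).1 hitg).norm
    refine h3.congr ?_
    filter_upwards [ae_restrict_of_ae hae, ae_restrict_mem measurableSet_Ioc] with t ht htm
    rw [Hc_value u a' b t ⟨htm.1, lt_of_le_of_ne htm.2 ht.2.1⟩ ra rb ht.2.2.1 ht.2.2.2 h1, norm_mul,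
      Complex.norm_exp_ofReal_mul_I, Complex.norm_real, mul_one, Real.norm_of_nonneg (hW0 t)]
  refine ⟨hitgOn.mono_set hsub, ?_⟩
  set κ : ℂ := Complex.exp ((-(2 * u * (Θ - π)) : ℝ) * Complex.I) with hκ
  have e1 : ∫ t in (0:ℝ)..π, (Hc u a' b (Complex.exp ((2 * t : ℝ) * Complex.I)) * κ).im = ((π : ℂ) * κ).im := by
    have := Complex.imCLM.intervalIntegral_comp_comm (hitg.mul_const κ)
    simp only [Complex.imCLM_apply] at this
    rw [this, intervalIntegral.integral_mul_const, hval]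
  have e2 : ∫ t in (0:ℝ)..π, (Hc u a' b (Complex.exp ((2 * t : ℝ) * Complex.I)) * κ).im
      = ∫ t in Ioc 0 π, S.indicator (fun t => Real.sin (2 * π * u) * Wt u a' b t) t := by
    rw [intervalIntegral.integral_of_le Real.pi_pos.le]
    refine integral_congr_ae ?_
    filter_upwards [ae_restrict_of_ae hae, ae_restrict_mem measurableSet_Ioc] with t ht htm
    have htm' : t ∈ Ioo 0 π := ⟨htm.1, lt_of_le_of_ne htm.2 ht.2.1⟩
    rw [Hc_value u a' b t htm' ra rb ht.2.2.1 ht.2.2.2 h1, mul_assoc, hκ, ← Complex.exp_add, ← add_mul, ← Complex.ofReal_add,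
      Complex.im_ofReal_mul, Complex.exp_ofReal_mul_I_im]
    by_cases hts : t ∈ S
    · rw [indicator_of_mem hts, hsumS t hts, mul_comm]; congr 2; ring
    · rw [indicator_of_notMem hts, hsumN t htm' hts ht.2.2.1 ht.2.2.2]
      simp
  rw [e1, setIntegral_indicator hSm, inter_eq_self_of_subset_right hsub, integral_const_mul] at e2
  rw [← e2, Complex.im_ofReal_mul, hκ, Complex.exp_ofReal_mul_I_im]
  congr 2
  ring

noncomputable def pa {n : ℕ} (θ h : Fin (n+1) → ℝ) : Fin (n+2) → ℝ := Fin.partialSum (fun i => θ i + h i)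

noncomputable def pb {n : ℕ} (θ h : Fin (n+1) → ℝ) (j : Fin (n+1)) : ℝ := pa θ h j.castSucc + θ j

noncomputable def EE {n : ℕ} (u : ℝ) (j : Fin (n+1)) (θ h : Fin (n+1) → ℝ) : ENNReal :=
  ∫⁻ τ in Ioo (pb θ h j) (pa θ h j.succ), ENNReal.ofReal (Wt u (fun j => pa θ h j.castSucc) (pb θ h) τ)

noncomputable def Av (u x : ℝ) : ℝ := x * (_root_.sinc (2*u*x) / _root_.sinc (2*π*u))

lemma partialSum_last {n : ℕ} (f : Fin n → ℝ) : Fin.partialSum f (Fin.last n) = ∑ i, f i := by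
  rw [Fin.partialSum, Fin.val_last, List.take_of_length_le (by simp), List.sum_ofFn]

lemma Wt_nonneg {m : ℕ} (u : ℝ) (a b : Fin m → ℝ) (t : ℝ) : 0 ≤ Wt u a b t :=
  Finset.prod_nonneg fun _ _ => Real.rpow_nonneg (by positivity) _

lemma sinc_pos_of {u : ℝ} (hu : u ∈ Set.Ioo (-(1/2) : ℝ) (1/2)) : 0 < _root_.sinc (2*π*u) := by
  unfold _root_.sinc
  split_ifs with h
  · exact one_pos
  · have hpi := Real.pi_pos
    rcases lt_or_gt_of_ne (show u ≠ 0 by rintro rfl; simp at h) with h' | h'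
    · have : Real.sin (2*π*u) < 0 := Real.sin_neg_of_neg_of_neg_pi_lt (by nlinarith) (by nlinarith [hu.1])
      exact div_pos_of_neg_of_neg this (by nlinarith)
    · have : 0 < Real.sin (2*π*u) := Real.sin_pos_of_pos_of_lt_pi (by positivity) (by nlinarith [hu.2])
      positivity

lemma EE_sum {n : ℕ} (u : ℝ) (hu : u ∈ Set.Ioo (-(1/2) : ℝ) (1/2)) (θ h : Fin (n+1) → ℝ) (hθ : ∀ i, 0 < θ i)
    (hh : ∀ i, 0 < h i) (hs : ∑ i, θ i + ∑ i, h i = π) :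
    ∑ j, EE u j θ h = ENNReal.ofReal (Av u (∑ i, h i)) := by
  have hsucc : ∀ j, pa θ h j.succ = pb θ h j + h j := fun j => by
    simp only [pa, pb, Fin.partialSum_succ]; ring
  by_cases hu0 : u = 0
  · subst hu0
    have e : Av 0 (∑ i, h i) = ∑ i, h i := by simp [Av, _root_.sinc]
    rw [e, ENNReal.ofReal_sum_of_nonneg fun i _ => (hh i).le]
    refine Finset.sum_congr rfl fun j _ => ?_
    simp [EE, Wt, hsucc]
  · obtain ⟨h1, h2⟩ := oneD (Nat.succ_pos n) u hu (pa θ h) (pb θ h) (fun j => by simp [pb, hθ j])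
      (fun j => by rw [hsucc]; linarith [hh j]) (by simp [pa]) (by
        rw [pa, partialSum_last, Finset.sum_add_distrib, hs])
    have hmono : StrictMono (pa θ h) := Fin.strictMono_iff_lt_succ.2 fun j => by
      rw [hsucc, pb]; linarith [hθ j, hh j]
    have hd : Pairwise (Function.onFun Disjoint fun j => Ioo (pb θ h j) (pa θ h j.succ)) := by
      have key : ∀ i j : Fin (n+1), i < j → Disjoint (Ioo (pb θ h i) (pa θ h i.succ)) (Ioo (pb θ h j) (pa θ h j.succ)) := by
        intro i j hij
        rw [Set.disjoint_left]
        intro t ht ht'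
        have := hmono.monotone (show i.succ ≤ j.castSucc by rw [Fin.le_def]; simpa using hij)
        have h3 := ht.2
        have h4 := ht'.1
        rw [pb] at h4
        linarith [hθ j]
      intro i j hij
      rcases lt_or_gt_of_ne hij with h | h
      · exact key i j h
      · exact (key j i h).symm
    have h3 : ∑ j, EE u j θ h = ∫⁻ τ in ⋃ j, Ioo (pb θ h j) (pa θ h j.succ), ENNReal.ofReal (Wt u (fun j => pa θ h j.castSucc) (pb θ h) τ) := by
      rw [lintegral_iUnion (fun j => measurableSet_Ioo) hd, tsum_fintype]; rfl
    rw [h3, ← ofReal_integral_eq_lintegral_ofReal h1 (ae_of_all _ fun t => Wt_nonneg _ _ _ _)]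
    congr 1
    have h4 : π - ∑ j, (pb θ h j - pa θ h j.castSucc) = ∑ i, h i := by simp [pb]; linarith
    rw [h4] at h2
    have hp : 0 < ∑ i, h i := Finset.sum_pos (fun i _ => hh i) Finset.univ_nonempty
    have hsne : Real.sin (2 * π * u) ≠ 0 := by
      have := sinc_pos_of hu
      unfold _root_.sinc at this
      rw [if_neg (by simp [hu0, Real.pi_ne_zero])] at this
      intro h; rw [h] at this; simp at this
    unfold Av _root_.sinc
    rw [if_neg (by simp [hu0, hp.ne']), if_neg (by simp [hu0, Real.pi_ne_zero])]
    have := Real.pi_ne_zero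
    have := hp.ne'
    have e : ∀ I : ℝ, Real.sin (2 * π * u) * I = π * Real.sin (2 * u * ∑ i, h i) →
        I = π * Real.sin (2 * u * ∑ i, h i) / Real.sin (2 * π * u) := by
      intro I hI; rw [← hI]; field_simp
    rw [e _ h2]
    generalize Real.sin (2 * u * ∑ i, h i) = A at *
    generalize Real.sin (2 * π * u) = B at *
    field_simp

lemma partialSum_rot {n : ℕ} (f : Fin (n+1) → ℝ) (i : Fin (n+1)) :
    Fin.partialSum (fun i => f (i + 1)) i.castSucc = Fin.partialSum f i.succ - f 0 := by
  rw [Fin.partialSum_succ', ← Fin.partialSum_init]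
  have : (Fin.init fun i : Fin (n+1) => f (i + 1)) = Fin.tail f := by
    ext k; simp [Fin.init, Fin.tail, Fin.coeSucc_eq_succ]
  rw [this]; ring

lemma EE_rot {n : ℕ} (u : ℝ) (θ h : Fin (n+1) → ℝ) (hs : ∑ i, θ i + ∑ i, h i = π) (j : Fin n) :
    EE u j.castSucc (fun i => θ (i+1)) (fun i => h (i+1)) = EE u j.succ θ h := by
  have ha : ∀ i : Fin (n+1), pa (fun i => θ (i+1)) (fun i => h (i+1)) i.castSucc = pa θ h i.succ - (θ 0 + h 0) := by
    intro i
    exact partialSum_rot (fun i => θ i + h i) i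
  have hb : ∀ i : Fin n, pb (fun i => θ (i+1)) (fun i => h (i+1)) i.castSucc = pb θ h i.succ - (θ 0 + h 0) := by
    intro i
    rw [pb, ha, pb, Fin.coeSucc_eq_succ, Fin.succ_castSucc]; ring
  have hlast : pa θ h (Fin.last (n+1)) = π := by
    rw [pa, partialSum_last, Finset.sum_add_distrib, hs]
  have hW : ∀ τ, Wt u (fun j => pa (fun i => θ (i+1)) (fun i => h (i+1)) j.castSucc) (pb (fun i => θ (i+1)) (fun i => h (i+1))) τ
     = Wt u (fun j => pa θ h j.castSucc) (pb θ h) (τ + (θ 0 + h 0)) := by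
    intro τ
    unfold Wt
    rw [Fin.prod_univ_castSucc, Fin.prod_univ_succ, mul_comm]
    congr 1
    · beta_reduce
      rw [pb, ha, Fin.last_add_one, Fin.succ_last, hlast]
      have e0 : pa θ h (Fin.castSucc 0) = 0 := by simp [pa]
      rw [pb, e0]
      have e1 : τ - (π - (θ 0 + h 0)) = τ + (θ 0 + h 0) - 0 - π := by ring
      have e2 : τ - (π - (θ 0 + h 0) + θ 0) = τ + (θ 0 + h 0) - (0 + θ 0) - π := by ring
      rw [e1, e2, Real.sin_sub_pi, Real.sin_sub_pi, abs_neg, abs_neg]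
    · refine Finset.prod_congr rfl fun i _ => ?_
      beta_reduce
      rw [ha, hb, Fin.succ_castSucc]
      congr 4 <;> ring_nf
  unfold EE
  simp_rw [hW]
  rw [hb, Fin.succ_castSucc, ha, ← lintegral_indicator measurableSet_Ioo, ← lintegral_indicator measurableSet_Ioo,

    ← lintegral_add_right_eq_self (μ := volume) (indicator (Ioo (pb θ h j.succ) _) _) (θ 0 + h 0)]
  refine lintegral_congr fun τ => ?_
  simp only [indicator, mem_Ioo]
  congr 1
  simp only [sub_lt_iff_lt_add, lt_sub_iff_add_lt]

lemma reflect_mp (L : ℝ) (n : ℕ) :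
    MeasurePreserving (fun y : Fin (n+1) → ℝ => (Fin.cons (L - ∑ i, y i) (Fin.tail y) : Fin (n+1) → ℝ)) := by
  have h1 : MeasurePreserving (fun q : (Fin n → ℝ) × ℝ => (q.1, (L - ∑ i, q.1 i) - q.2)) := by
    refine (MeasurePreserving.id volume).skew_product (g := fun (v : Fin n → ℝ) (s : ℝ) => (L - ∑ i, v i) - s) ?_ ?_
    · simp only [Function.uncurry_def]; fun_prop
    · exact ae_of_all _ fun v => (Measure.measurePreserving_sub_left volume _).map_eq
  have e := volume_preserving_piFinSuccAbove (fun _ : Fin (n+1) => ℝ) 0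
  have sw : MeasurePreserving (Prod.swap : ℝ × (Fin n → ℝ) → _) := Measure.measurePreserving_swap
  have sw' : MeasurePreserving (Prod.swap : (Fin n → ℝ) × ℝ → _) := Measure.measurePreserving_swap
  have h := (e.symm).comp (sw'.comp (h1.comp (sw.comp e)))
  convert h using 1
  ext y i
  simp only [Function.comp, MeasurableEquiv.piFinSuccAbove, Fin.sum_univ_succ]
  refine Fin.cases ?_ (fun i => ?_) i
  · simp [Fin.tail, Fin.insertNthEquiv, Fin.removeNth]; ring
  · simp [Fin.tail, Fin.insertNthEquiv, Fin.removeNth]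

lemma psum_mp (N : ℕ) :
    MeasurePreserving (fun y : Fin N → ℝ => (fun i : Fin N => Fin.partialSum y i.succ)) := by
  induction N with
  | zero =>
    have e : (fun y : Fin 0 → ℝ => (fun i : Fin 0 => Fin.partialSum y i.succ)) = id := by
      funext y i; exact i.elim0
    rw [e]
    exact MeasurePreserving.id (volume : Measure (Fin 0 → ℝ))
  | succ N ih =>
    have h1 : MeasurePreserving (fun q : ℝ × (Fin N → ℝ) => (q.1, (fun _ => q.1) + (fun i : Fin N => Fin.partialSum q.2 i.succ))) := by
      refine (MeasurePreserving.id volume).skew_product (g := fun (s : ℝ) (v : Fin N → ℝ) => (fun _ => s) + (fun i : Fin N => Fin.partialSum v i.succ)) ?_ ?_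
      · have := ih.measurable
        simp only [Function.uncurry_def]
        refine Measurable.add ?_ (this.comp measurable_snd)
        fun_prop
      · exact ae_of_all _ fun s => ((measurePreserving_add_left volume (fun _ : Fin N => s)).comp ih).map_eq
    have e := volume_preserving_piFinSuccAbove (fun _ : Fin (N+1) => ℝ) 0
    have h := (e.symm).comp (h1.comp e)
    convert h using 1
    ext y i
    rw [Fin.partialSum_succ']
    simp only [Function.comp, MeasurableEquiv.piFinSuccAbove]
    refine Fin.cases ?_ (fun i => ?_) i
    · simp [Fin.insertNthEquiv, Fin.removeNth]
    · simp [Fin.tail, Fin.insertNthEquiv, Fin.removeNth]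

lemma rot_mp (n : ℕ) : MeasurePreserving (fun (y : Fin (n+1) → ℝ) (i : Fin (n+1)) => y (i + 1)) := by
  have := volume_measurePreserving_piCongrLeft (fun _ : Fin (n+1) => ℝ) (Equiv.addRight (1 : Fin (n+1))).symm
  have e : (fun (y : Fin (n+1) → ℝ) (i : Fin (n+1)) => y (i + 1)) =
      (MeasurableEquiv.piCongrLeft (fun _ : Fin (n+1) => ℝ) (Equiv.addRight (1 : Fin (n+1))).symm) := by
    funext y i
    have := MeasurableEquiv.piCongrLeft_apply_apply (β := fun _ : Fin (n+1) => ℝ) (Equiv.addRight (1 : Fin (n+1))).symm y (i + 1)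
    rw [← this]; simp
  rw [e]
  exact this

lemma simplex_vol (n : ℕ) : ∀ L : ℝ, 0 < L →
    volume {h : Fin n → ℝ | (∀ i, 0 < h i) ∧ ∑ i, h i < L} = ENNReal.ofReal (L ^ n / n.factorial) := by
  induction n with
  | zero =>
    intro L hL
    have : {h : Fin 0 → ℝ | (∀ i, 0 < h i) ∧ ∑ i, h i < L} = univ := by ext; simp [hL]
    rw [this, volume_pi, Measure.pi_univ]; simp
  | succ n ih =>
    intro L hL
    have e := (volume_preserving_piFinSuccAbove (fun _ : Fin (n+1) => ℝ) 0).symm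
    have hms : ∀ (n : ℕ) (L : ℝ), MeasurableSet {h : Fin n → ℝ | (∀ i, 0 < h i) ∧ ∑ i, h i < L} := by
      intro n L; measurability
    rw [← e.measure_preimage_equiv, Measure.volume_eq_prod, Measure.prod_apply ((hms _ _).preimage (MeasurableEquiv.measurable _))]
    have : ∀ s : ℝ, volume (Prod.mk s ⁻¹' ((MeasurableEquiv.piFinSuccAbove (fun _ : Fin (n+1) => ℝ) 0).symm ⁻¹' {h : Fin (n+1) → ℝ | (∀ i, 0 < h i) ∧ ∑ i, h i < L}))
       = (Ioo 0 L).indicator (fun s => ENNReal.ofReal ((L - s) ^ n / n.factorial)) s := by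
      intro s
      have e1 : (Prod.mk s ⁻¹' ((MeasurableEquiv.piFinSuccAbove (fun _ : Fin (n+1) => ℝ) 0).symm ⁻¹' {h : Fin (n+1) → ℝ | (∀ i, 0 < h i) ∧ ∑ i, h i < L}))
         = {h : Fin n → ℝ | 0 < s ∧ (∀ i, 0 < h i) ∧ ∑ i, h i < L - s} := by
        ext h
        simp [MeasurableEquiv.piFinSuccAbove, Fin.insertNthEquiv, Fin.forall_fin_succ, Fin.sum_univ_succ, lt_sub_iff_add_lt', and_assoc]
      rw [e1]
      by_cases hs : s ∈ Ioo 0 L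
      · rw [indicator_of_mem hs, ← ih (L - s) (by linarith [hs.2])]
        simp [hs.1]
      · rw [indicator_of_notMem hs]
        convert measure_empty (μ := (volume : Measure (Fin n → ℝ)))
        rw [eq_empty_iff_forall_notMem]
        rintro h ⟨h1, h2, h3⟩
        refine hs ⟨h1, ?_⟩
        have := Finset.sum_nonneg (fun i (_ : i ∈ Finset.univ) => (h2 i).le)
        linarith
    simp_rw [this]
    rw [lintegral_indicator measurableSet_Ioo, ← ofReal_integral_eq_lintegral_ofReal]
    · congr 1
      rw [← integral_Ioc_eq_integral_Ioo, ← intervalIntegral.integral_of_le hL.le]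
      have := intervalIntegral.integral_comp_sub_left (a := 0) (b := L) (fun x : ℝ => x ^ n / n.factorial) L
      rw [this]
      simp [Nat.factorial_succ]
      field_simp
    · refine Continuous.integrableOn_Ioc (a := 0) (b := L) (by fun_prop) |>.mono_set Ioo_subset_Ioc_self
    · filter_upwards [ae_restrict_mem measurableSet_Ioo] with s hs
      have : 0 ≤ L - s := by linarith [hs.2]
      simp only [Pi.zero_apply]; positivity

noncomputable def exth {n : ℕ} (L : ℝ) (h : Fin n → ℝ) : Fin (n+1) → ℝ :=
  Fin.snoc (α := fun _ => ℝ) h (L - ∑ i, h i)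

noncomputable def EP {n : ℕ} (u : ℝ) (j : Fin (n+1)) (θ h : Fin (n+1) → ℝ) : ENNReal :=
  Set.indicator {h : Fin (n+1) → ℝ | ∀ i, 0 < h i} (EE u j θ) h

noncomputable def MM {n : ℕ} (u : ℝ) (j : Fin (n+1)) (θ : Fin (n+1) → ℝ) : ENNReal :=
  ∫⁻ h : Fin n → ℝ, EP u j θ (exth (π - ∑ i, θ i) h)

def SΘ (n : ℕ) : Set (Fin (n+1) → ℝ) := {θ | (∀ i, 0 < θ i) ∧ ∑ i, θ i < π}

noncomputable def QQ {n : ℕ} (u : ℝ) (G : (Fin (n+1) → ℝ) → ENNReal) (j : Fin (n+1)) : ENNReal :=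
  ∫⁻ θ, (SΘ n).indicator (fun θ => G θ * MM u j θ) θ

lemma pa_meas {n : ℕ} (i : Fin (n+2)) : Measurable (fun q : (Fin (n+1) → ℝ) × (Fin (n+1) → ℝ) => pa q.1 q.2 i) := by
  unfold pa
  induction i using Fin.induction with
  | zero => simp
  | succ j ih =>
    simp only [Fin.partialSum_succ]
    fun_prop

lemma pb_meas {n : ℕ} (i : Fin (n+1)) : Measurable (fun q : (Fin (n+1) → ℝ) × (Fin (n+1) → ℝ) => pb q.1 q.2 i) := by
  unfold pb
  have := pa_meas i.castSucc
  fun_prop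

lemma Wt_meas {n : ℕ} (u : ℝ) : Measurable (fun q : ((Fin (n+1) → ℝ) × (Fin (n+1) → ℝ)) × ℝ =>
    Wt u (fun j => pa q.1.1 q.1.2 j.castSucc) (pb q.1.1 q.1.2) q.2) := by
  unfold Wt
  refine Finset.measurable_prod _ fun j _ => ?_
  have h1 : Measurable (fun q : ((Fin (n+1) → ℝ) × (Fin (n+1) → ℝ)) × ℝ => pa q.1.1 q.1.2 j.castSucc) := (pa_meas j.castSucc).comp measurable_fst
  have h2 : Measurable (fun q : ((Fin (n+1) → ℝ) × (Fin (n+1) → ℝ)) × ℝ => pb q.1.1 q.1.2 j) := (pb_meas j).comp measurable_fst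
  fun_prop

lemma EE_meas {n : ℕ} (u : ℝ) (j : Fin (n+1)) :
    Measurable (fun q : (Fin (n+1) → ℝ) × (Fin (n+1) → ℝ) => EE u j q.1 q.2) := by
  unfold EE
  have h1 : Measurable (fun q : ((Fin (n+1) → ℝ) × (Fin (n+1) → ℝ)) × ℝ => pa q.1.1 q.1.2 j.succ) := (pa_meas j.succ).comp measurable_fst
  have h2 : Measurable (fun q : ((Fin (n+1) → ℝ) × (Fin (n+1) → ℝ)) × ℝ => pb q.1.1 q.1.2 j) := (pb_meas j).comp measurable_fst
  have hS : MeasurableSet {q : ((Fin (n+1) → ℝ) × (Fin (n+1) → ℝ)) × ℝ | pb q.1.1 q.1.2 j < q.2 ∧ q.2 < pa q.1.1 q.1.2 j.succ} :=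
    (measurableSet_lt h2 measurable_snd).inter (measurableSet_lt measurable_snd h1)
  have := ((Wt_meas (n := n) u).ennreal_ofReal.indicator hS).lintegral_prod_right' (ν := volume)
  convert this using 2 with q
  rw [← lintegral_indicator measurableSet_Ioo]
  rfl

lemma posset_meas (n : ℕ) : MeasurableSet {h : Fin n → ℝ | ∀ i, 0 < h i} := by
  measurability

lemma EP_meas {n : ℕ} (u : ℝ) (j : Fin (n+1)) :
    Measurable (fun q : (Fin (n+1) → ℝ) × (Fin (n+1) → ℝ) => EP u j q.1 q.2) :=
  (EE_meas u j).indicator (measurable_snd (posset_meas (n+1)))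

lemma exth_meas (n : ℕ) : Measurable (fun q : ℝ × (Fin n → ℝ) => exth q.1 q.2) := by
  unfold exth
  refine measurable_pi_lambda _ fun i => ?_
  refine Fin.lastCases ?_ (fun i => ?_) i
  · simp only [Fin.snoc_last]; fun_prop
  · simp only [Fin.snoc_castSucc]; fun_prop

lemma EPx_meas {n : ℕ} (u : ℝ) (j : Fin (n+1)) :
    Measurable (fun q : (Fin (n+1) → ℝ) × (Fin n → ℝ) => EP u j q.1 (exth (π - ∑ i, q.1 i) q.2)) := by
  have h1 : Measurable (fun q : (Fin (n+1) → ℝ) × (Fin n → ℝ) => ((π - ∑ i, q.1 i, q.2) : ℝ × (Fin n → ℝ))) := by fun_prop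
  have h2 : Measurable (fun q : (Fin (n+1) → ℝ) × (Fin n → ℝ) => exth (π - ∑ i, q.1 i) q.2) := (exth_meas n).comp h1
  have h3 : Measurable (fun q : (Fin (n+1) → ℝ) × (Fin n → ℝ) => (q.1, exth (π - ∑ i, q.1 i) q.2)) :=
    measurable_fst.prodMk h2
  have h4 := (EP_meas u j).comp h3
  simp only [Function.comp_def] at h4
  exact h4

lemma EPx_meas' {n : ℕ} (u : ℝ) (j : Fin (n+1)) (θ : Fin (n+1) → ℝ) :
    Measurable (fun h : Fin n → ℝ => EP u j θ (exth (π - ∑ i, θ i) h)) := by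
  have h4 := (EPx_meas u j).comp (measurable_prodMk_left (x := θ))
  simp only [Function.comp_def] at h4
  exact h4

lemma MM_meas {n : ℕ} (u : ℝ) (j : Fin (n+1)) : Measurable (MM u j) :=
  (EPx_meas u j).lintegral_prod_right'

lemma SΘ_meas (n : ℕ) : MeasurableSet (SΘ n) := by
  unfold SΘ
  measurability

lemma QQ_meas {n : ℕ} (u : ℝ) (G : (Fin (n+1) → ℝ) → ENNReal) (hG : Measurable G) (j : Fin (n+1)) :
    Measurable (fun θ => (SΘ n).indicator (fun θ => G θ * MM u j θ) θ) :=
  (hG.mul (MM_meas u j)).indicator (SΘ_meas n)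

lemma exth_sum {n : ℕ} (L : ℝ) (h : Fin n → ℝ) : ∑ i, exth L h i = L := by
  rw [Fin.sum_univ_castSucc]; simp [exth]

lemma sum_rot {n : ℕ} (f : Fin (n+1) → ℝ) : ∑ i, f (i + 1) = ∑ i, f i :=
  Equiv.sum_comp (Equiv.addRight (1 : Fin (n+1))) f

lemma forall_rot {n : ℕ} (f : Fin (n+1) → ℝ) : (∀ i, 0 < f (i + 1)) ↔ ∀ i, 0 < f i := by
  constructor
  · intro h i
    have := h (i - 1)
    simpa using this
  · intro h i; exact h _

lemma exth_rot {m : ℕ} (L : ℝ) (h : Fin (m+1) → ℝ) :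
    exth L (fun i => (Fin.cons (L - ∑ i, h i) (Fin.tail h) : Fin (m+1) → ℝ) (i + 1)) = fun i => exth L h (i + 1) := by
  have hs : ∑ i, (Fin.cons (L - ∑ i, h i) (Fin.tail h) : Fin (m+1) → ℝ) (i + 1) = L - h 0 := by
    rw [sum_rot, Fin.sum_univ_succ]
    simp only [Fin.cons_zero, Fin.cons_succ, Fin.tail]
    rw [Fin.sum_univ_succ]; ring
  funext i
  unfold exth
  rw [hs]
  refine Fin.lastCases ?_ (fun i => ?_) i
  · simp only [Fin.snoc_last, Fin.last_add_one]
    have : (0 : Fin (m+2)) = Fin.castSucc 0 := rfl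
    rw [this, Fin.snoc_castSucc]; ring
  · simp only [Fin.snoc_castSucc, Fin.coeSucc_eq_succ]
    refine Fin.lastCases ?_ (fun i => ?_) i
    · rw [Fin.succ_last, Fin.snoc_last, Fin.last_add_one, Fin.cons_zero]
    · rw [Fin.coeSucc_eq_succ, Fin.cons_succ, Fin.succ_castSucc, Fin.snoc_castSucc, Fin.tail]

lemma MM_rot {n : ℕ} (u : ℝ) (θ : Fin (n+1) → ℝ) (j : Fin n) :
    MM u j.castSucc (fun i => θ (i + 1)) = MM u j.succ θ := by
  obtain _ | m := n
  · exact j.elim0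
  unfold MM
  rw [sum_rot]
  have hT := (rot_mp m).comp (reflect_mp (π - ∑ i, θ i) m)
  have hm : Measurable fun h : Fin (m+1) → ℝ => EP u j.castSucc (fun i => θ (i + 1)) (exth (π - ∑ i, θ i) h) := by
    have := (EPx_meas u j.castSucc).comp (measurable_prodMk_left (x := fun i => θ (i + 1)))
    simp only [Function.comp_def] at this
    rwa [sum_rot] at this
  rw [← hT.lintegral_comp hm]
  refine lintegral_congr fun h => ?_
  simp only [Function.comp_def]
  rw [exth_rot]
  unfold EP
  simp only [indicator, mem_ofPred_eq, forall_rot]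
  rw [EE_rot _ _ _ (by rw [exth_sum]; ring)]
  split_ifs <;> rfl

lemma QQ_step {n : ℕ} (u : ℝ) (G : (Fin (n+1) → ℝ) → ENNReal) (hG : Measurable G)
    (hG' : ∀ θ, G (fun i => θ (i + 1)) = G θ) (j : Fin n) : QQ u G j.castSucc = QQ u G j.succ := by
  unfold QQ
  rw [← (rot_mp n).lintegral_comp (QQ_meas u G hG j.castSucc)]
  refine lintegral_congr fun θ => ?_
  have hmem : (fun i => θ (i + 1)) ∈ SΘ n ↔ θ ∈ SΘ n := by
    change ((∀ i, 0 < θ (i + 1)) ∧ ∑ i, θ (i + 1) < π) ↔ ((∀ i, 0 < θ i) ∧ ∑ i, θ i < π)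
    rw [forall_rot, sum_rot]
  by_cases hc : θ ∈ SΘ n
  · rw [indicator_of_mem hc, indicator_of_mem (hmem.2 hc), hG', MM_rot]
  · rw [indicator_of_notMem hc, indicator_of_notMem (fun h => hc (hmem.1 h))]

lemma QQ_eq {n : ℕ} (u : ℝ) (G : (Fin (n+1) → ℝ) → ENNReal) (hG : Measurable G)
    (hG' : ∀ θ, G (fun i => θ (i + 1)) = G θ) (j : Fin (n+1)) : QQ u G j = QQ u G 0 := by
  induction j using Fin.induction with
  | zero => rfl
  | succ j ih => rw [← QQ_step u G hG hG', ih]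

lemma Av_nonneg (u : ℝ) (hu : u ∈ Set.Ioo (-(1/2) : ℝ) (1/2)) (x : ℝ) (hx : 0 < x) (hx' : x < π) : 0 ≤ Av u x := by
  unfold Av
  have h1 := sinc_pos_of hu
  have h2 : 0 ≤ _root_.sinc (2 * u * x) := by
    unfold _root_.sinc
    split_ifs with h
    · exact zero_le_one
    · rcases lt_or_gt_of_ne (show u ≠ 0 by rintro rfl; simp at h) with h' | h'
      · exact div_nonneg_of_nonpos (Real.sin_nonpos_of_nonpos_of_neg_pi_le (by nlinarith) (by nlinarith [hu.1])) (by nlinarith)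
      · exact div_nonneg (Real.sin_nonneg_of_nonneg_of_le_pi (by positivity) (by nlinarith [hu.2])) (by positivity)
  positivity

lemma MM_sum {n : ℕ} (u : ℝ) (hu : u ∈ Set.Ioo (-(1/2) : ℝ) (1/2)) (θ : Fin (n+1) → ℝ) (hθ : θ ∈ SΘ n) :
    ∑ j, MM u j θ = ENNReal.ofReal (Av u (π - ∑ i, θ i) * ((π - ∑ i, θ i) ^ n / n.factorial)) := by
  unfold MM
  have hL : 0 < π - ∑ i, θ i := by linarith [hθ.2]
  have hL' : π - ∑ i, θ i < π := by
    linarith [Finset.sum_pos (fun i (_ : i ∈ Finset.univ) => hθ.1 i) Finset.univ_nonempty]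
  rw [← lintegral_finsetSum _ fun j _ => EPx_meas' u j θ]
  have hset : MeasurableSet {h : Fin n → ℝ | (∀ i, 0 < h i) ∧ ∑ i, h i < π - ∑ i, θ i} := by measurability
  have : ∀ h : Fin n → ℝ, ∑ j, EP u j θ (exth (π - ∑ i, θ i) h)
      = {h : Fin n → ℝ | (∀ i, 0 < h i) ∧ ∑ i, h i < π - ∑ i, θ i}.indicator (fun _ => ENNReal.ofReal (Av u (π - ∑ i, θ i))) h := by
    intro h
    have hiff : (∀ i, 0 < exth (π - ∑ i, θ i) h i) ↔ (∀ i, 0 < h i) ∧ ∑ i, h i < π - ∑ i, θ i := by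
      rw [Fin.forall_fin_succ']
      simp [exth]

    unfold EP
    by_cases hh : ∀ i, 0 < exth (π - ∑ i, θ i) h i
    · rw [indicator_of_mem (s := {h : Fin n → ℝ | (∀ i, 0 < h i) ∧ ∑ i, h i < π - ∑ i, θ i}) (hiff.1 hh)]
      have h3 := EE_sum u hu θ _ hθ.1 hh (by rw [exth_sum]; ring)
      rw [exth_sum] at h3
      rw [← h3]
      exact Finset.sum_congr rfl fun j _ => indicator_of_mem (s := {h : Fin (n+1) → ℝ | ∀ i, 0 < h i}) hh _
    · rw [indicator_of_notMem (s := {h : Fin n → ℝ | (∀ i, 0 < h i) ∧ ∑ i, h i < π - ∑ i, θ i}) (fun h' => hh (hiff.2 h'))]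
      exact Finset.sum_eq_zero fun j _ => indicator_of_notMem (s := {h : Fin (n+1) → ℝ | ∀ i, 0 < h i}) hh _
  simp_rw [this]
  rw [lintegral_indicator hset, setLIntegral_const, simplex_vol n _ hL, ← ENNReal.ofReal_mul (Av_nonneg u hu _ hL hL')]

lemma QQ_final {n : ℕ} (u : ℝ) (hu : u ∈ Set.Ioo (-(1/2) : ℝ) (1/2)) (G : (Fin (n+1) → ℝ) → ENNReal) (hG : Measurable G)
    (hG' : ∀ θ, G (fun i => θ (i + 1)) = G θ) :
    QQ u G (Fin.last n) = ∫⁻ θ in SΘ n, ENNReal.ofReal (_root_.sinc (2*u*(π - ∑ i, θ i)) / _root_.sinc (2*π*u)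
      * ((π - ∑ i, θ i) ^ (n+1) / (n+1).factorial)) * G θ := by
  have h1 : ∑ j, QQ u G j = (n + 1 : ℕ) * QQ u G (Fin.last n) := by
    rw [Finset.sum_congr rfl fun j _ => (QQ_eq u G hG hG' j).trans (QQ_eq u G hG hG' (Fin.last n)).symm]
    simp
  have h2 : ∑ j, QQ u G j = (n + 1 : ℕ) * ∫⁻ θ in SΘ n, ENNReal.ofReal (_root_.sinc (2*u*(π - ∑ i, θ i)) / _root_.sinc (2*π*u)
      * ((π - ∑ i, θ i) ^ (n+1) / (n+1).factorial)) * G θ := by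
    unfold QQ
    rw [← lintegral_finsetSum _ fun j _ => QQ_meas u G hG j,
      ← lintegral_const_mul' _ _ (ENNReal.natCast_ne_top _), ← lintegral_indicator (SΘ_meas n)]
    refine lintegral_congr fun θ => ?_
    by_cases hθ : θ ∈ SΘ n
    · simp only [indicator_of_mem hθ]
      rw [← Finset.mul_sum, MM_sum u hu θ hθ, ← mul_assoc, mul_comm]
      congr 1
      rw [← ENNReal.ofReal_natCast, ← ENNReal.ofReal_mul (by positivity)]
      congr 1
      rw [Av, Nat.factorial_succ]
      push_cast
      field_simp
      ring
    · simp only [indicator_of_notMem hθ]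
      simp
  have h3 := h1.symm.trans h2
  exact (ENNReal.mul_right_inj (by simp) (ENNReal.natCast_ne_top _)).1 h3

lemma ev_lt {p : ℕ} (i : Fin p) : 2*i.val < 2*p := by have := i.isLt; omega
lemma od_lt {p : ℕ} (i : Fin p) : 2*i.val+1 < 2*p := by have := i.isLt; omega
def ev {p : ℕ} (i : Fin p) : Fin (2*p) := ⟨2*i.val, ev_lt i⟩
def od {p : ℕ} (i : Fin p) : Fin (2*p) := ⟨2*i.val+1, od_lt i⟩

def eoEquiv (p : ℕ) : Fin p ⊕ Fin p ≃ Fin (2*p) where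
  toFun := Sum.elim ev od
  invFun k := if k.val % 2 = 0 then Sum.inl ⟨k.val / 2, by have := k.isLt; omega⟩
    else Sum.inr ⟨k.val / 2, by have := k.isLt; omega⟩
  left_inv := by
    rintro (i | i)
    · have h : 2 * i.val % 2 = 0 := by omega
      have h' : 2 * i.val / 2 = i.val := by omega
      simp [ev]
    · have h : (2 * i.val + 1) % 2 = 1 := by omega
      have h' : (2 * i.val + 1) / 2 = i.val := by omega
      simp [od, h']
  right_inv := by
    intro k
    dsimp only
    split_ifs with h
    · ext; simp [ev]; omega
    · ext; simp [od]; omega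

noncomputable def inter {p : ℕ} (κ θ : Fin p → ℝ) (k : Fin (2*p)) : ℝ :=
  Sum.elim κ θ ((eoEquiv p).symm k)

lemma inter_ev {p : ℕ} (κ θ : Fin p → ℝ) (i : Fin p) : inter κ θ (ev i) = κ i := by
  have : (eoEquiv p).symm (ev i) = Sum.inl i := by rw [Equiv.symm_apply_eq]; rfl
  rw [inter, this]; rfl

lemma inter_od {p : ℕ} (κ θ : Fin p → ℝ) (i : Fin p) : inter κ θ (od i) = θ i := by
  have : (eoEquiv p).symm (od i) = Sum.inr i := by rw [Equiv.symm_apply_eq]; rfl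
  rw [inter, this]; rfl

lemma inter_mp (p : ℕ) : MeasurePreserving (fun q : (Fin p → ℝ) × (Fin p → ℝ) => inter q.1 q.2) := by
  have h1 := volume_measurePreserving_sumPiEquivProdPi_symm (fun _ : Fin p ⊕ Fin p => ℝ)
  have h2 := volume_measurePreserving_piCongrLeft (fun _ : Fin (2*p) => ℝ) (eoEquiv p)
  have h3 := h2.comp h1
  have e : (fun q : (Fin p → ℝ) × (Fin p → ℝ) => inter q.1 q.2) = (MeasurableEquiv.piCongrLeft (fun _ : Fin (2*p) => ℝ) (eoEquiv p))
      ∘ (MeasurableEquiv.sumPiEquivProdPi (fun _ : Fin p ⊕ Fin p => ℝ)).symm := by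
   funext q k
   simp only [Function.comp_def]
   obtain ⟨s, rfl⟩ := (eoEquiv p).surjective k
   rw [MeasurableEquiv.coe_piCongrLeft, Equiv.piCongrLeft_apply_apply, inter, Equiv.symm_apply_apply]
   cases s <;> rfl
  rw [e]; exact h3

noncomputable def Mx {n : ℕ} (θ : Fin (n+1) → ℝ) (τ : ℝ) (h : Fin n → ℝ) : Fin (2*(n+1)) → ℝ :=
  fun k => Fin.partialSum (inter (Fin.cons (π - τ) h : Fin (n+1) → ℝ) θ) k.succ

lemma Mx_mp (n : ℕ) : MeasurePreserving (fun q : (Fin (n+1) → ℝ) × (ℝ × (Fin n → ℝ)) => Mx q.1 q.2.1 q.2.2) := by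
  have h0 : MeasurePreserving (fun τ : ℝ => π - τ) := Measure.measurePreserving_sub_left volume π
  have h1 : MeasurePreserving (Prod.map (fun τ : ℝ => π - τ) (id : (Fin n → ℝ) → _)) :=
    h0.prod (MeasurePreserving.id volume)
  have h2 := (volume_preserving_piFinSuccAbove (fun _ : Fin (n+1) => ℝ) 0).symm
  have h3 := h2.comp h1
  have h4 := (MeasurePreserving.id (volume : Measure (Fin (n+1) → ℝ))).prod h3
  have h5 : MeasurePreserving (Prod.swap : (Fin (n+1) → ℝ) × (Fin (n+1) → ℝ) → _) := Measure.measurePreserving_swap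
  have h6 := (psum_mp (2*(n+1))).comp ((inter_mp (n+1)).comp (h5.comp h4))
  rw [← Measure.volume_eq_prod] at h6
  convert h6 using 1
  funext q k
  simp only [Function.comp_def, Mx, Prod.map, Prod.swap, id]
  congr 2
  funext i
  simp [MeasurableEquiv.piFinSuccAbove]

lemma Mx_zero {n : ℕ} (θ : Fin (n+1) → ℝ) (τ : ℝ) (h : Fin n → ℝ) : Mx θ τ h 0 = π - τ := by
  rw [Mx, Fin.partialSum_succ]
  have : (0 : Fin (2*(n+1))) = ev (0 : Fin (n+1)) := rfl
  rw [this, inter_ev]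
  simp [ev]

lemma Mx_succ {n : ℕ} (θ : Fin (n+1) → ℝ) (τ : ℝ) (h : Fin n → ℝ) (k : ℕ) (hk : k + 1 < 2*(n+1)) :
    Mx θ τ h ⟨k+1, hk⟩ = Mx θ τ h ⟨k, by omega⟩ + inter (Fin.cons (π - τ) h : Fin (n+1) → ℝ) θ ⟨k+1, hk⟩ := by
  rw [Mx, Fin.partialSum_succ]; rfl

lemma Mx_od {n : ℕ} (θ : Fin (n+1) → ℝ) (τ : ℝ) (h : Fin n → ℝ) (i : Fin (n+1)) :
    Mx θ τ h (od i) = Mx θ τ h (ev i) + θ i := by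
  have := Mx_succ θ τ h (2*i.val) (by omega)
  rw [od, this]
  congr 1
  exact inter_od _ _ i

lemma Mx_ev {n : ℕ} (θ : Fin (n+1) → ℝ) (τ : ℝ) (h : Fin n → ℝ) (i : Fin (n+1)) :
    Mx θ τ h (ev i) = pa θ (exth (π - ∑ i, θ i) h) i.castSucc + (π - τ) := by
  induction i using Fin.induction with
  | zero =>
    have : ev (0 : Fin (n+1)) = 0 := rfl
    rw [this, Mx_zero]; simp [pa]
  | succ i ih =>
    have h1 := Mx_succ θ τ h (2*i.val+1) (by omega)
    have h2 : ev i.succ = ⟨2*i.val+1+1, by omega⟩ := by ext; simp [ev]; omega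
    have h3 : (⟨2*i.val+1, by omega⟩ : Fin (2*(n+1))) = od i.castSucc := rfl
    rw [h2, h1, h3, ← h2, inter_ev, Mx_od, ih, Fin.cons_succ, ← Fin.succ_castSucc, pa, Fin.partialSum_succ]
    simp only [exth, Fin.snoc_castSucc]
    ring

lemma Mx_od' {n : ℕ} (θ : Fin (n+1) → ℝ) (τ : ℝ) (h : Fin n → ℝ) (i : Fin (n+1)) :
    Mx θ τ h (od i) = pb θ (exth (π - ∑ i, θ i) h) i + (π - τ) := by
  rw [Mx_od, Mx_ev, pb]; ring

def RX (N : ℕ) : Set (Fin N → ℝ) := {x | StrictMono x ∧ ∀ i, 0 < x i ∧ x i < π}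

lemma RX_meas (N : ℕ) : MeasurableSet (RX N) := by
  unfold RX StrictMono
  measurability

lemma Mx_mem {n : ℕ} (θ : Fin (n+1) → ℝ) (τ : ℝ) (h : Fin n → ℝ) :
    Mx θ τ h ∈ RX (2*(n+1)) ↔ (∀ i, 0 < θ i) ∧ (∀ i, 0 < h i) ∧ pb θ (exth (π - ∑ i, θ i) h) (Fin.last n) < τ ∧ τ < π := by
  have hlast : Fin.last (2*n+1) = od (Fin.last n) := rfl
  have key : Mx θ τ h ∈ RX (2*(n+1)) ↔ (∀ k : Fin (2*(n+1)), 0 < inter (Fin.cons (π - τ) h : Fin (n+1) → ℝ) θ k)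
      ∧ Mx θ τ h (od (Fin.last n)) < π := by
    constructor
    · rintro ⟨h1, h2⟩
      refine ⟨fun k => ?_, (h2 _).2⟩
      rcases k with ⟨_ | k, hk⟩
      · have h3 := (h2 0).1
        rw [Mx_zero] at h3
        have : (⟨0, hk⟩ : Fin (2*(n+1))) = ev (0 : Fin (n+1)) := rfl
        rw [this, inter_ev]; simpa using h3
      · have h3 := Mx_succ θ τ h k hk
        have h4 : Mx θ τ h ⟨k, by omega⟩ < Mx θ τ h ⟨k+1, hk⟩ := h1 (by simp)
        linarith
    · rintro ⟨h1, h2⟩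
      have hm : StrictMono (Mx θ τ h) := by
        refine Fin.strictMono_iff_lt_succ (n := 2*n+1).2 fun i => ?_
        have h3 := Mx_succ θ τ h i.val (by omega)
        have h4 := h1 ⟨i.val+1, by omega⟩
        have h5 : Mx θ τ h i.castSucc = Mx θ τ h ⟨i.val, by omega⟩ := rfl
        have h6 : Mx θ τ h i.succ = Mx θ τ h ⟨i.val+1, by omega⟩ := rfl
        rw [h5, h6]; linarith
      refine ⟨hm, fun i => ⟨?_, ?_⟩⟩
      · have h3 := hm.monotone (Fin.zero_le i)
        have h4 := h1 0
        have : (0 : Fin (2*(n+1))) = ev (0 : Fin (n+1)) := rfl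
        rw [this, inter_ev] at h4
        rw [Mx_zero] at h3
        simp at h4
        linarith
      · exact (hm.monotone (show i ≤ od (Fin.last n) from Fin.le_last (n := 2*n+1) i)).trans_lt h2
  rw [key, Mx_od']
  have h3 : (∀ k : Fin (2*(n+1)), 0 < inter (Fin.cons (π - τ) h : Fin (n+1) → ℝ) θ k) ↔
     (∀ i, 0 < (Fin.cons (π - τ) h : Fin (n+1) → ℝ) i) ∧ ∀ i, 0 < θ i := by
    constructor
    · intro h1
      exact ⟨fun i => by simpa [inter_ev] using h1 (ev i), fun i => by simpa [inter_od] using h1 (od i)⟩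
    · rintro ⟨h1, h2⟩ k
      obtain ⟨s, rfl⟩ := (eoEquiv (n+1)).surjective k
      rcases s with s | s
      · exact (h1 s).trans_eq (inter_ev _ θ s).symm
      · exact (h2 s).trans_eq (inter_od (Fin.cons (π - τ) h : Fin (n+1) → ℝ) θ s).symm
  rw [h3, Fin.forall_fin_succ]
  simp only [Fin.cons_zero, Fin.cons_succ]
  constructor
  · rintro ⟨⟨⟨a, b⟩, c⟩, d⟩
    exact ⟨c, b, by linarith, by linarith⟩
  · rintro ⟨a, b, c, d⟩
    exact ⟨⟨⟨by linarith, b⟩, a⟩, by linarith⟩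

noncomputable def FX {n : ℕ} (u : ℝ) (G : (Fin (n+1) → ℝ) → ENNReal) (x : Fin (2*(n+1)) → ℝ) : ENNReal :=
  ENNReal.ofReal (∏ i : Fin (n+1), (Real.sin (x (ev i)) / Real.sin (x (od i))) ^ (2*u)) * G (fun i => x (od i) - x (ev i))

lemma FX_meas {n : ℕ} (u : ℝ) (G : (Fin (n+1) → ℝ) → ENNReal) (hG : Measurable G) : Measurable (FX u G) := by
  unfold FX
  have h1 : Measurable (fun x : Fin (2*(n+1)) → ℝ => fun i : Fin (n+1) => x (od i) - x (ev i)) := by fun_prop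
  have h2 := hG.comp h1
  simp only [Function.comp_def] at h2
  refine Measurable.mul (Measurable.ennreal_ofReal ?_) h2
  refine Finset.measurable_prod _ fun j _ => ?_
  fun_prop

lemma pa_exth_last {n : ℕ} (θ : Fin (n+1) → ℝ) (h : Fin n → ℝ) :
    pa θ (exth (π - ∑ i, θ i) h) (Fin.last n).succ = π := by
  rw [Fin.succ_last, pa, partialSum_last, Finset.sum_add_distrib, exth_sum]; ring

lemma pb_exth_last {n : ℕ} (θ : Fin (n+1) → ℝ) (h : Fin n → ℝ) :
    pb θ (exth (π - ∑ i, θ i) h) (Fin.last n) = ∑ i, θ i + ∑ i, h i := by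
  have h1 := pa_exth_last θ h
  rw [pa, Fin.partialSum_succ] at h1
  rw [pb, pa]
  simp only [exth, Fin.snoc_last] at h1 ⊢
  linarith

lemma Mx_Wt {n : ℕ} (u : ℝ) (θ : Fin (n+1) → ℝ) (τ : ℝ) (h : Fin n → ℝ) (hx : Mx θ τ h ∈ RX (2*(n+1))) :
    ∏ i : Fin (n+1), (Real.sin (Mx θ τ h (ev i)) / Real.sin (Mx θ τ h (od i))) ^ (2*u)
      = Wt u (fun j => pa θ (exth (π - ∑ i, θ i) h) j.castSucc) (pb θ (exth (π - ∑ i, θ i) h)) τ := by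
  unfold Wt
  refine Finset.prod_congr rfl fun i _ => ?_
  have h1 := hx.2 (ev i)
  have h2 := hx.2 (od i)
  have s1 := Real.sin_pos_of_pos_of_lt_pi h1.1 h1.2
  have s2 := Real.sin_pos_of_pos_of_lt_pi h2.1 h2.2
  rw [← abs_of_pos s1, ← abs_of_pos s2, Mx_ev, Mx_od']
  have e : ∀ c : ℝ, Real.sin (c + (π - τ)) = Real.sin (τ - c) := fun c => by
    rw [← Real.sin_pi_sub (τ - c)]; congr 1; ring
  rw [e, e]

lemma Mx_inner {n : ℕ} (u : ℝ) (G : (Fin (n+1) → ℝ) → ENNReal) (θ : Fin (n+1) → ℝ) (h : Fin n → ℝ) :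
    ∫⁻ τ, (RX (2*(n+1))).indicator (FX u G) (Mx θ τ h)
      = (SΘ n).indicator (fun θ => G θ * EP u (Fin.last n) θ (exth (π - ∑ i, θ i) h)) θ := by
  have hH : (∀ i, 0 < exth (π - ∑ i, θ i) h i) ↔ (∀ i, 0 < h i) ∧ ∑ i, h i < π - ∑ i, θ i := by
    rw [Fin.forall_fin_succ']
    simp [exth]
  by_cases hc : θ ∈ SΘ n ∧ ∀ i, 0 < exth (π - ∑ i, θ i) h i
  · obtain ⟨hθ, hh⟩ := hc
    rw [indicator_of_mem hθ, EP, indicator_of_mem (s := {h : Fin (n+1) → ℝ | ∀ i, 0 < h i}) hh, EE, pa_exth_last]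
    rw [← lintegral_const_mul _ (by
      have h5 := (Wt_meas (n := n) u).comp (measurable_prodMk_left (x := (θ, exth (π - ∑ i, θ i) h)))
      simp only [Function.comp_def] at h5
      exact h5.ennreal_ofReal), ← lintegral_indicator measurableSet_Ioo]
    refine lintegral_congr fun τ => ?_
    have hm : Mx θ τ h ∈ RX (2*(n+1)) ↔ τ ∈ Ioo (pb θ (exth (π - ∑ i, θ i) h) (Fin.last n)) π := by
      rw [Mx_mem]
      exact ⟨fun a => a.2.2, fun a => ⟨hθ.1, (hH.1 hh).1, a⟩⟩
    by_cases hτ : Mx θ τ h ∈ RX (2*(n+1))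
    · rw [indicator_of_mem hτ, indicator_of_mem (hm.1 hτ), FX, Mx_Wt u θ τ h hτ, mul_comm]
      congr 2
      funext i
      rw [Mx_od]; ring
    · rw [indicator_of_notMem hτ, indicator_of_notMem (fun a => hτ (hm.2 a))]
  · have h0 : ∀ τ, Mx θ τ h ∉ RX (2*(n+1)) := by
      intro τ hτ
      rw [Mx_mem, pb_exth_last] at hτ
      obtain ⟨a, b, c, d⟩ := hτ
      have hb : 0 ≤ ∑ i, h i := Finset.sum_nonneg fun i _ => (b i).le
      exact hc ⟨⟨a, by linarith⟩, hH.2 ⟨b, by linarith⟩⟩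
    simp only [indicator_of_notMem (h0 _), lintegral_zero]
    by_cases hθ : θ ∈ SΘ n
    · have hh : ¬ ∀ i, 0 < exth (π - ∑ i, θ i) h i := fun a => hc ⟨hθ, a⟩
      rw [indicator_of_mem hθ, EP, indicator_of_notMem (s := {h : Fin (n+1) → ℝ | ∀ i, 0 < h i}) hh, mul_zero]
    · rw [indicator_of_notMem hθ]

lemma Z_form {n : ℕ} (u : ℝ) (G : (Fin (n+1) → ℝ) → ENNReal) (hG : Measurable G) :
    ∫⁻ x in RX (2*(n+1)), FX u G x = QQ u G (Fin.last n) := by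
  rw [← lintegral_indicator (RX_meas _)]
  have hF : Measurable ((RX (2*(n+1))).indicator (FX u G)) := (FX_meas u G hG).indicator (RX_meas _)
  have hFM := hF.comp (Mx_mp n).measurable
  simp only [Function.comp_def] at hFM
  rw [← (Mx_mp n).lintegral_comp hF]
  rw [Measure.volume_eq_prod, lintegral_prod _ hFM.aemeasurable, QQ]
  refine lintegral_congr fun θ => ?_
  have h1 : Measurable (fun z : ℝ × (Fin n → ℝ) => (RX (2*(n+1))).indicator (FX u G) (Mx θ z.1 z.2)) := by
    have := hFM.comp (measurable_prodMk_left (x := θ))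
    simpa only [Function.comp_def] using this
  rw [Measure.volume_eq_prod, lintegral_prod_symm _ h1.aemeasurable]
  simp only [Mx_inner]
  by_cases hθ : θ ∈ SΘ n
  · simp only [indicator_of_mem hθ]
    rw [lintegral_const_mul _ (EPx_meas' u _ θ), MM]
  · simp only [indicator_of_notMem hθ, lintegral_zero]

lemma Z_final {n : ℕ} (u : ℝ) (hu : u ∈ Set.Ioo (-(1/2) : ℝ) (1/2)) (G : (Fin (n+1) → ℝ) → ENNReal) (hG : Measurable G)
    (hG' : ∀ θ, G (fun i => θ (i + 1)) = G θ) :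
    ∫⁻ x in RX (2*(n+1)), FX u G x = ∫⁻ θ in SΘ n, ENNReal.ofReal (_root_.sinc (2*u*(π - ∑ i, θ i)) / _root_.sinc (2*π*u)
      * ((π - ∑ i, θ i) ^ (n+1) / (n+1).factorial)) * G θ := by
  rw [Z_form u G hG, QQ_final u hu G hG hG']

lemma int_split {α : Type*} [MeasureSpace α] (s : Set α) (hs : MeasurableSet s) (W P : α → ℝ) (hW : Measurable W)
    (hP : Measurable P) (h0 : ∀ x ∈ s, 0 ≤ W x) (hfin : ∫⁻ x in s, ENNReal.ofReal (W x) * ENNReal.ofReal |P x| < ⊤) :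
    ∫ x in s, W x * P x = (∫⁻ x in s, ENNReal.ofReal (W x) * ENNReal.ofReal (P x)).toReal
      - (∫⁻ x in s, ENNReal.ofReal (W x) * ENNReal.ofReal (-P x)).toReal := by
  have hi : Integrable (fun x => W x * P x) (volume.restrict s) := by
    refine ⟨(hW.mul hP).aestronglyMeasurable, ?_⟩
    rw [hasFiniteIntegral_iff_norm]
    refine lt_of_eq_of_lt ?_ hfin
    refine setLIntegral_congr_fun hs fun x hx => ?_
    rw [← ENNReal.ofReal_mul (h0 x hx), Real.norm_eq_abs, abs_mul, abs_of_nonneg (h0 x hx)]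
  rw [integral_eq_lintegral_pos_part_sub_lintegral_neg_part hi]
  congr 2
  · refine setLIntegral_congr_fun hs fun x hx => ?_
    rw [← ENNReal.ofReal_mul (h0 x hx)]
  · refine setLIntegral_congr_fun hs fun x hx => ?_
    rw [← ENNReal.ofReal_mul (h0 x hx)]
    simp

lemma sinc_meas : Measurable _root_.sinc := by
  unfold _root_.sinc
  exact Measurable.ite (measurableSet_singleton 0) measurable_const (by fun_prop)

lemma sinc_abs_le (x : ℝ) : |_root_.sinc x| ≤ 1 := by
  unfold _root_.sinc
  split_ifs with h
  · simp
  · rw [abs_div]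
    exact div_le_one_of_le₀ Real.abs_sin_le_abs (abs_nonneg _)

noncomputable def ww {n : ℕ} (u : ℝ) (θ : Fin (n+1) → ℝ) : ℝ :=
  _root_.sinc (2*u*(π - ∑ i, θ i)) / _root_.sinc (2*π*u) * ((π - ∑ i, θ i) ^ (n+1) / (n+1).factorial)

lemma ww_meas {n : ℕ} (u : ℝ) : Measurable (ww (n := n) u) := by
  unfold ww
  have h1 : Measurable (fun θ : Fin (n+1) → ℝ => 2*u*(π - ∑ i, θ i)) := by fun_prop
  have h2 := sinc_meas.comp h1
  simp only [Function.comp_def] at h2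
  fun_prop

lemma SΘ_le {n : ℕ} (θ : Fin (n+1) → ℝ) (hθ : θ ∈ SΘ n) (i : Fin (n+1)) : θ i < π :=
  (Finset.single_le_sum (fun i _ => (hθ.1 i).le) (Finset.mem_univ i)).trans_lt hθ.2

lemma SΘ_L {n : ℕ} (θ : Fin (n+1) → ℝ) (hθ : θ ∈ SΘ n) : 0 < π - ∑ i, θ i ∧ π - ∑ i, θ i < π :=
  ⟨by linarith [hθ.2], by
    linarith [Finset.sum_pos (fun i (_ : i ∈ Finset.univ) => hθ.1 i) Finset.univ_nonempty]⟩

lemma ww_nonneg {n : ℕ} (u : ℝ) (hu : u ∈ Set.Ioo (-(1/2) : ℝ) (1/2)) (θ : Fin (n+1) → ℝ) (hθ : θ ∈ SΘ n) : 0 ≤ ww u θ := by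
  obtain ⟨h1, h2⟩ := SΘ_L θ hθ
  have h3 := Av_nonneg u hu _ h1 h2
  have : ww u θ = Av u (π - ∑ i, θ i) * ((π - ∑ i, θ i) ^ n / (n+1).factorial) := by
    rw [ww, Av]; ring
  rw [this]
  positivity

lemma ww_bound {n : ℕ} (u : ℝ) (hu : u ∈ Set.Ioo (-(1/2) : ℝ) (1/2)) (θ : Fin (n+1) → ℝ) (hθ : θ ∈ SΘ n) :
    ww u θ ≤ 1 / _root_.sinc (2*π*u) * π ^ (n+1) := by
  obtain ⟨h1, h2⟩ := SΘ_L θ hθ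
  have h3 := sinc_pos_of hu
  have h4 := (abs_le.1 (sinc_abs_le (2*u*(π - ∑ i, θ i)))).2
  rw [ww]
  have h5 : (π - ∑ i, θ i) ^ (n+1) / ((n+1).factorial : ℝ) ≤ π ^ (n+1) := by
    refine (div_le_self (by positivity) (by exact_mod_cast Nat.succ_le_of_lt (Nat.factorial_pos _))).trans ?_
    exact pow_le_pow_left₀ h1.le h2.le _
  exact mul_le_mul (div_le_div_of_nonneg_right h4 h3.le) h5 (by positivity) (by positivity)

lemma main_aux {n : ℕ} (u : ℝ) (hu : u ∈ Set.Ioo (-(1/2) : ℝ) (1/2)) (f : ℝ → ℝ) (hf : Continuous f) :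
    ∫ x in RX (2*(n+1)), (∏ i : Fin (n+1), (Real.sin (x (ev i)) / Real.sin (x (od i))) ^ (2*u))
        * ∏ i : Fin (n+1), f (x (od i) - x (ev i))
      = ∫ θ in SΘ n, ww u θ * ∏ i, f (θ i) := by
  have hrot : ∀ θ : Fin (n+1) → ℝ, ∏ i, f (θ (i+1)) = ∏ i, f (θ i) := fun θ =>
    Equiv.prod_comp (Equiv.addRight (1 : Fin (n+1))) (fun i => f (θ i))
  have hPm : Measurable (fun θ : Fin (n+1) → ℝ => ∏ i, f (θ i)) := by
    have := hf.measurable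
    fun_prop
  have hfin : ∫⁻ θ in SΘ n, ENNReal.ofReal (ww u θ) * ENNReal.ofReal |∏ i, f (θ i)| < ⊤ := by
    obtain ⟨C, hC⟩ := isCompact_Icc.exists_bound_of_continuousOn (s := Icc 0 π) hf.continuousOn
    have hv : volume (SΘ n) < ⊤ := by
      have := simplex_vol (n+1) π Real.pi_pos
      rw [SΘ, this]; exact ENNReal.ofReal_lt_top
    refine (setLIntegral_mono' (g := fun _ => ENNReal.ofReal (1 / _root_.sinc (2*π*u) * π ^ (n+1)) * ENNReal.ofReal (∏ _i : Fin (n+1), C)) (SΘ_meas n) fun θ hθ => ?_).trans_lt ?_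
    · refine mul_le_mul' (ENNReal.ofReal_le_ofReal (ww_bound u hu θ hθ)) (ENNReal.ofReal_le_ofReal ?_)
      rw [Finset.abs_prod]
      exact Finset.prod_le_prod (fun _ _ => abs_nonneg _) fun i _ => hC _ ⟨(hθ.1 i).le, (SΘ_le θ hθ i).le⟩
    · rw [setLIntegral_const]
      exact ENNReal.mul_lt_top (ENNReal.mul_lt_top ENNReal.ofReal_lt_top ENNReal.ofReal_lt_top) hv
  have key : ∀ g : ℝ → ℝ, Measurable g →
      ∫⁻ x in RX (2*(n+1)), ENNReal.ofReal (∏ i : Fin (n+1), (Real.sin (x (ev i)) / Real.sin (x (od i))) ^ (2*u))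
        * ENNReal.ofReal (g (∏ i : Fin (n+1), f (x (od i) - x (ev i))))
      = ∫⁻ θ in SΘ n, ENNReal.ofReal (ww u θ) * ENNReal.ofReal (g (∏ i, f (θ i))) := by
    intro g hg
    exact Z_final u hu (fun θ => ENNReal.ofReal (g (∏ i, f (θ i)))) (hg.comp hPm).ennreal_ofReal
      (fun θ => by rw [hrot])
  have hWm : Measurable (fun x : Fin (2*(n+1)) → ℝ => ∏ i : Fin (n+1), (Real.sin (x (ev i)) / Real.sin (x (od i))) ^ (2*u)) :=
    Finset.measurable_prod _ fun j _ => by fun_prop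
  have hPm' : Measurable (fun x : Fin (2*(n+1)) → ℝ => ∏ i : Fin (n+1), f (x (od i) - x (ev i))) :=
    Finset.measurable_prod _ fun j _ => hf.measurable.comp (by fun_prop)
  rw [int_split _ (SΘ_meas n) _ _ (ww_meas u) hPm (fun θ hθ => ww_nonneg u hu θ hθ) hfin,
    int_split _ (RX_meas _) _ _ hWm hPm' ?_ ?_]
  · rw [key (fun x => x) measurable_id, key (fun x => -x) measurable_neg]
  · intro x hx
    refine Finset.prod_nonneg fun i _ => Real.rpow_nonneg (div_nonneg ?_ ?_) _
    · exact (Real.sin_pos_of_pos_of_lt_pi (hx.2 _).1 (hx.2 _).2).le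
    · exact (Real.sin_pos_of_pos_of_lt_pi (hx.2 _).1 (hx.2 _).2).le
  · rw [key (fun x => |x|) (by fun_prop)]; exact hfin

noncomputable def Tr {n : ℕ} (y : Fin (n+1) → ℝ) : Fin (n+1) → ℝ := Fin.cons (π - ∑ i, y i) (Fin.tail y)

lemma Tr_sum {n : ℕ} (y : Fin (n+1) → ℝ) : ∑ i, Tr y i = π - y 0 := by
  unfold Tr
  rw [Fin.sum_univ_succ, Fin.cons_zero]
  simp only [Fin.cons_succ]
  rw [Fin.sum_univ_succ y]
  simp only [Fin.tail]
  ring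

lemma Tr_inv {n : ℕ} : Function.Involutive (Tr (n := n)) := by
  intro y
  funext i
  refine Fin.cases ?_ (fun i => ?_) i
  · rw [Tr, Fin.cons_zero, Tr_sum]; ring
  · rw [Tr, Fin.cons_succ, Fin.tail, Tr, Fin.cons_succ, Fin.tail]

lemma Tr_mem {n : ℕ} (y : Fin (n+1) → ℝ) : Tr y ∈ SΘ n ↔ y ∈ SΘ n := by
  have key : ∀ y : Fin (n+1) → ℝ, y ∈ SΘ n → Tr y ∈ SΘ n := by
    intro y hy
    refine ⟨fun i => ?_, ?_⟩
    · refine Fin.cases ?_ (fun i => ?_) i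
      · rw [Tr, Fin.cons_zero]; linarith [hy.2]
      · rw [Tr, Fin.cons_succ]; exact hy.1 _
    · rw [Tr_sum]; linarith [hy.1 0]
  exact ⟨fun h => by simpa [Tr_inv y] using key _ h, key y⟩

lemma Tr_int {n : ℕ} (g : (Fin (n+1) → ℝ) → ℝ) : ∫ θ in SΘ n, g (Tr θ) = ∫ θ in SΘ n, g θ := by
  have hmp : MeasurePreserving (Tr (n := n)) := reflect_mp π n
  have hemb : MeasurableEmbedding (Tr (n := n)) :=
    (MeasurableEquiv.ofInvolutive Tr Tr_inv hmp.measurable).measurableEmbedding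
  rw [← hmp.setIntegral_preimage_emb hemb g]
  congr 2
  ext y
  exact (Tr_mem y).symm

theorem main_identity (p : ℕ) (hp : 0 < p) (u : ℝ) (hu : u ∈ Set.Ioo (-(1/2) : ℝ) (1/2))
    (f : ℝ → ℝ) (hf : Continuous f) :
    (∫ x : Fin (2*p) → ℝ in {x | StrictMono x ∧ ∀ i, 0 < x i ∧ x i < π},
      ∏ i : Fin p,
        ((Real.sin (x (ev i))
            / Real.sin (x (od i))) ^ (2*u)
          * f (x (od i) - x (ev i))))
    = ∫ θ : Fin p → ℝ in {θ | (∀ i, 0 < θ i) ∧ ∑ i, θ i < π},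
        (_root_.sinc (2*u*θ ⟨0, hp⟩) / _root_.sinc (2*π*u)) * ((θ ⟨0, hp⟩)^p / (p.factorial : ℝ))
          * (∏ i ∈ Finset.univ.filter (fun i : Fin p => 1 ≤ i.val), f (θ i))
          * f (π - ∑ i, θ i) := by
  obtain ⟨n, rfl⟩ : ∃ n, p = n + 1 := ⟨p - 1, by omega⟩
  have h1 := main_aux (n := n) u hu f hf
  simp only [← Finset.prod_mul_distrib] at h1
  refine Eq.trans h1 ?_
  refine Eq.trans ?_ (Tr_int (n := n) _)
  refine setIntegral_congr_fun (SΘ_meas n) fun θ _ => ?_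
  have hz : (⟨0, hp⟩ : Fin (n+1)) = 0 := rfl
  have h2 : π - (π - θ 0) = θ 0 := by ring
  have h3 : ∏ i ∈ Finset.univ.filter (fun i : Fin (n+1) => 1 ≤ i.val), f (Tr θ i) = ∏ i : Fin n, f (θ i.succ) := by
    rw [Finset.prod_filter, Fin.prod_univ_succ]
    simp [Tr, Fin.tail]
  have h4 : Tr θ 0 = π - ∑ i, θ i := by rw [Tr, Fin.cons_zero]
  simp only [hz, Tr_sum, h2, h3, h4, ww]
  rw [Fin.prod_univ_succ]
  ring

end helpers

/-- **Integral identity (Lemma 5.3, first identity).** For `p ≥ 1`, `u ∈ (−1/2,1/2)`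
and `f : ℝ → ℝ` continuous,
`Z_p[f] = ∫ (∏ᵢ (sin αᵢ/sin βᵢ)^{2u} f(βᵢ−αᵢ)) dα dβ` over
`{0 < α₁ < β₁ < ⋯ < α_p < β_p < π}` equals
`∫_S (sinc(2uθ₀)/sinc(2πu)) (θ₀^p/p!) ∏_{i=1}^{p−1} f(θᵢ) · f(π−θ₀−⋯−θ_{p−1}) dθ`,
where `S = {θ ∈ ℝ^p : θᵢ > 0, ∑θᵢ < π}`. The interleaved variables are encoded by a
strictly monotone `x : Fin (2p) → ℝ` with `αᵢ = x(2i)`, `βᵢ = x(2i+1)`. -/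
theorem stmt_2 (p : ℕ) (hp : 0 < p) (u : ℝ) (hu : u ∈ Set.Ioo (-(1/2) : ℝ) (1/2))
    (f : ℝ → ℝ) (hf : Continuous f) :
    (∫ x : Fin (2*p) → ℝ in {x | StrictMono x ∧ ∀ i, 0 < x i ∧ x i < π},
      ∏ i : Fin p,
        ((Real.sin (x ⟨2*i.val, by have := i.isLt; omega⟩)
            / Real.sin (x ⟨2*i.val+1, by have := i.isLt; omega⟩)) ^ (2*u)
          * f (x ⟨2*i.val+1, by have := i.isLt; omega⟩ - x ⟨2*i.val, by have := i.isLt; omega⟩)))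
    = ∫ θ : Fin p → ℝ in {θ | (∀ i, 0 < θ i) ∧ ∑ i, θ i < π},
        (_root_.sinc (2*u*θ ⟨0, hp⟩) / _root_.sinc (2*π*u)) * ((θ ⟨0, hp⟩)^p / (p.factorial : ℝ))
          * (∏ i ∈ Finset.univ.filter (fun i : Fin p => 1 ≤ i.val), f (θ i))
          * f (π - ∑ i, θ i) := by
  exact main_identity p hp u hu f hf
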